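/- Let f ∈ LlogL(-1,1). Then T(f)(t) = 0 for almost every t ∈ (-1,1) if and only if there exists a constant c ∈ ℂ such that f(x) = c/√(1-x²) for almost every x ∈ (-1,1). That is, the kernel of T : LlogL(-1,1) → L^1(-1,1) is the one-dimensional span of the function x ↦ 1/√(1-x²). -/

import Mathlib

open MeasureTheory Set Filter

noncomputable section

/-- Lebesgue measure restricted to the interval `(-1, 1)`. -/
def μI : Measure ℝ := volume.restrict (Set.Ioo (-1 : ℝ) 1)

/-- The finite Hilbert transform: the principal-value limit
`T(f)(t) = lim_{ε→0⁺} (1/π) ∫_{x∈(-1,1), |x-t|≥ε} f(x)/(x-t) dx`. -/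
def FHT (f : ℝ → ℂ) (t : ℝ) : ℂ :=
  limUnder (nhdsWithin (0 : ℝ) (Set.Ioi 0)) fun ε : ℝ =>
    (Real.pi : ℂ)⁻¹ *
      ∫ x in {x : ℝ | x ∈ Set.Ioo (-1 : ℝ) 1 ∧ ε ≤ |x - t|}, f x / ((x : ℂ) - (t : ℂ))

/-- The operator `T̂(g)(x) = -(1-x²)^{-1/2} T(t ↦ √(1-t²) g(t))(x)`. -/
def hatT (g : ℝ → ℂ) (x : ℝ) : ℂ :=
  -((Real.sqrt (1 - x ^ 2) : ℂ))⁻¹ * FHT (fun t => (Real.sqrt (1 - t ^ 2) : ℂ) * g t) x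

/-- Membership in the Zygmund space `L log L(-1,1)`:
`f` is a.e. measurable on `(-1,1)` and `∫ |f| log⁺|f| < ∞`. -/
def MemLlogL (f : ℝ → ℂ) : Prop :=
  AEStronglyMeasurable f μI ∧
    IntegrableOn (fun x => ‖f x‖ * max (Real.log ‖f x‖) 0) (Set.Ioo (-1 : ℝ) 1)

/-- The distribution function `λ ↦ |{x ∈ (-1,1) : |f(x)| > λ}|`. -/
def distFun (f : ℝ → ℂ) (lam : ℝ) : ℝ :=
  (volume {x : ℝ | x ∈ Set.Ioo (-1 : ℝ) 1 ∧ lam < ‖f x‖}).toReal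

/-- The decreasing rearrangement `f*` of `f`, a function on `(0,2)`. -/
def decRearr (f : ℝ → ℂ) (t : ℝ) : ℝ :=
  sInf {lam : ℝ | 0 ≤ lam ∧ distFun f lam ≤ t}

/-- The `L log L` norm `‖f‖ = ∫_0^2 f*(t) log(2e/t) dt`. -/
def llogLNorm (f : ℝ → ℂ) : ℝ :=
  ∫ t in Set.Ioo (0 : ℝ) 2, decRearr f t * Real.log (2 * Real.exp 1 / t)

/-- The `L(log L)^α` norm `∫_0^2 f*(t) log^α(2e/t) dt` (for `α = 0` this is the `L¹` norm). -/
def zygNorm (α : ℝ) (f : ℝ → ℂ) : ℝ :=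
  ∫ t in Set.Ioo (0 : ℝ) 2, decRearr f t * Real.log (2 * Real.exp 1 / t) ^ α

/-- Membership in the Zygmund space `L(log L)^α(-1,1)`. -/
def MemZyg (α : ℝ) (f : ℝ → ℂ) : Prop :=
  AEStronglyMeasurable f μI ∧
    IntegrableOn (fun t => decRearr f t * Real.log (2 * Real.exp 1 / t) ^ α)
      (Set.Ioo (0 : ℝ) 2)

/-- Membership in `L(log L)²(-1,1)`: `∫ |f| (log(2+|f|))² < ∞`. -/
def MemLlogL2 (f : ℝ → ℂ) : Prop :=
  AEStronglyMeasurable f μI ∧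
    IntegrableOn (fun x => ‖f x‖ * Real.log (2 + ‖f x‖) ^ 2) (Set.Ioo (-1 : ℝ) 1)

/-- The constant `c(β,γ) = max{1/(1-β), 1/(1-γ), 1/(β+γ-1)}`. -/
def cBG (β γ : ℝ) : ℝ := max (max (1 / (1 - β)) (1 / (1 - γ))) (1 / (β + γ - 1))

/-!
If `T f = 0` and `∫ f = 0`, then `T (x f) = t T f + π⁻¹ ∫ f = 0`. Since `√(1 - x²)` has finite
Hilbert transform `-t`, Parseval's formula for `T` gives `∫ x f = 0`, so that `x f` satisfies the
same two conditions. By iteration all moments of `f` vanish, and `f = 0`. In general, one first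
makes the integral vanish by subtracting a multiple of `1 / √(1 - x²)`, which lies in the kernel.

Parseval's formula is where `f ∈ L log L` enters. With `C` the Cauchy integral of a nonnegative
integrable function, `exp (i C)` is bounded, and Fatou's theorem on boundary values shows that the
conjugate Poisson integrals, hence the truncated transforms, converge almost everywhere. The passage
to the limit under the integral sign needs uniform integrability of the conjugate Poisson integrals
of `f`; it follows by duality from the exponential integrability of conjugates of bounded functions,
which in turn comes from evaluating the holomorphic function `cosh (a C)`.
-/

open scoped Topology

section Cayley

lemma isOpen_upperHalfPlane : IsOpen {z : ℂ | 0 < z.im} :=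
  isOpen_lt continuous_const Complex.continuous_im

lemma one_sub_ofReal_mul_I_ne_zero (t : ℝ) : (1 - t * Complex.I : ℂ) ≠ 0 := fun h => by
  simpa using congrArg Complex.re h

/-- The Cayley map `ζ ↦ i(1 - ζ)/(1 + ζ)` from the unit disc onto the upper half-plane; it takes
the junk value `0` at `ζ = -1`. -/
def cayleyMap (ζ : ℂ) : ℂ := Complex.I * (1 - ζ) / (1 + ζ)

/-- The point `(1 + it)/(1 - it)` of the unit circle, which the Cayley map sends to `t`. -/
def cayleyCircle (t : ℝ) : ℂ := (1 + t * Complex.I) / (1 - t * Complex.I)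

lemma norm_cayleyCircle (t : ℝ) : ‖cayleyCircle t‖ = 1 := by
  have hconj : (1 - t * Complex.I : ℂ) = (starRingEnd ℂ) (1 + t * Complex.I) := by
    simp [sub_eq_add_neg]
  have hne := norm_ne_zero_iff.2 (one_sub_ofReal_mul_I_ne_zero t)
  rw [cayleyCircle, norm_div, div_eq_one_iff_eq hne, hconj, Complex.norm_conj]

lemma one_add_cayleyCircle (t : ℝ) : 1 + cayleyCircle t = 2 / (1 - t * Complex.I) := by
  have := one_sub_ofReal_mul_I_ne_zero t
  rw [cayleyCircle]
  field_simp
  ring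

lemma one_add_cayleyCircle_ne_zero (t : ℝ) : 1 + cayleyCircle t ≠ 0 := by
  rw [one_add_cayleyCircle]
  exact div_ne_zero two_ne_zero (one_sub_ofReal_mul_I_ne_zero t)

lemma cayleyMap_cayleyCircle (t : ℝ) : cayleyMap (cayleyCircle t) = t := by
  have hne := one_sub_ofReal_mul_I_ne_zero t
  have hsub : 1 - cayleyCircle t = -(2 * t * Complex.I) / (1 - t * Complex.I) := by
    rw [cayleyCircle]
    field_simp
    ring
  rw [cayleyMap, one_add_cayleyCircle, hsub, ← mul_div_assoc, div_div_div_cancel_right₀ hne]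
  linear_combination (-t : ℂ) * Complex.I_sq

lemma cayleyMap_zero : cayleyMap 0 = Complex.I := by simp [cayleyMap]

lemma one_add_ne_zero_of_norm_lt_one {ζ : ℂ} (h : ‖ζ‖ < 1) : 1 + ζ ≠ 0 := fun h0 => by
  rw [eq_neg_of_add_eq_zero_right h0] at h
  simp at h

lemma differentiableAt_cayleyMap {ζ : ℂ} (h : 1 + ζ ≠ 0) : DifferentiableAt ℂ cayleyMap ζ := by
  unfold cayleyMap
  fun_prop (disch := assumption)

lemma cayleyMap_im (ζ : ℂ) : (cayleyMap ζ).im = (1 - ‖ζ‖ ^ 2) / Complex.normSq (1 + ζ) := by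
  rw [← Complex.normSq_eq_norm_sq, Complex.normSq_apply ζ, cayleyMap]
  simp only [Complex.div_im, Complex.mul_re, Complex.mul_im, Complex.I_re, Complex.I_im,
    Complex.sub_re, Complex.sub_im, Complex.add_re, Complex.add_im, Complex.one_re,
    Complex.one_im]
  ring

lemma cayleyMap_im_pos {ζ : ℂ} (h : ‖ζ‖ < 1) : 0 < (cayleyMap ζ).im := by
  rw [cayleyMap_im]
  have hsq : ‖ζ‖ ^ 2 < 1 := by nlinarith [norm_nonneg ζ]
  exact div_pos (by linarith) (Complex.normSq_pos.2 (one_add_ne_zero_of_norm_lt_one h))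

lemma exp_two_mul_arctan_mul_I (t : ℝ) :
    Complex.exp (((2 * Real.arctan t : ℝ) : ℂ) * Complex.I) = cayleyCircle t := by
  have hp : (0 : ℝ) < 1 + t ^ 2 := by positivity
  have hne := one_sub_ofReal_mul_I_ne_zero t
  have hs : (Real.sqrt (1 + t ^ 2) : ℂ) ^ 2 = 1 + (t : ℂ) ^ 2 := by
    rw [← Complex.ofReal_pow, Real.sq_sqrt hp.le]
    push_cast
    ring
  have hs0 : (Real.sqrt (1 + t ^ 2) : ℂ) ≠ 0 := by exact_mod_cast (Real.sqrt_pos.2 hp).ne'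
  have hsq : Complex.exp (((2 * Real.arctan t : ℝ) : ℂ) * Complex.I)
      = Complex.exp ((Real.arctan t : ℂ) * Complex.I) ^ 2 := by
    rw [← Complex.exp_nat_mul]
    push_cast
    ring_nf
  rw [hsq, Complex.exp_mul_I, ← Complex.ofReal_cos, ← Complex.ofReal_sin, Real.cos_arctan,
    Real.sin_arctan, cayleyCircle]
  push_cast
  field_simp
  rw [hs]
  linear_combination -(t : ℂ) ^ 2 * (1 + t * Complex.I) * Complex.I_sq

variable {E : Type*} [NormedAddCommGroup E]

lemma range_two_mul_arctan :
    range (fun t : ℝ => 2 * Real.arctan t) = Ioo (-Real.pi) Real.pi := by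
  have hcomp := range_comp (fun x : ℝ => 2 * x) Real.arctan
  rwa [Real.range_arctan, Set.image_mul_left_Ioo two_pos, mul_neg,
    mul_div_cancel₀ _ two_ne_zero] at hcomp

lemma intervalIntegral_exp_mul_I_eq_integral_cayleyCircle [NormedSpace ℝ E] (g : ℂ → E) :
    ∫ θ in (-Real.pi)..Real.pi, g (Complex.exp (θ * Complex.I)) =
      ∫ t : ℝ, (2 * (1 + t ^ 2)⁻¹) • g (cayleyCircle t) := by
  have hsubst := integral_image_eq_integral_abs_deriv_smul (s := univ)
    (f := fun t : ℝ => 2 * Real.arctan t) MeasurableSet.univ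
    (fun t _ => ((Real.hasDerivAt_arctan t).const_mul 2).hasDerivWithinAt)
    (fun a _ b _ h => Real.arctan_injective (by simpa using h))
    (fun θ : ℝ => g (Complex.exp (θ * Complex.I)))
  rw [image_univ, range_two_mul_arctan, Measure.restrict_univ] at hsubst
  rw [intervalIntegral.integral_of_le (by linarith [Real.pi_pos]), integral_Ioc_eq_integral_Ioo,
    hsubst]
  refine integral_congr_ae (Eventually.of_forall fun t => ?_)
  dsimp only
  rw [exp_two_mul_arctan_mul_I, one_div, abs_of_pos (by positivity)]

variable [NormedSpace ℂ E]

-- The mean value property of `F ∘ cayleyMap` on the circle of radius `r`.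
lemma integral_comp_cayleyMap_mul_cayleyCircle [CompleteSpace E] {F : ℂ → E}
    (hF : DifferentiableOn ℂ F {z | 0 < z.im}) {r : ℝ} (h0 : 0 < r) (h1 : r < 1) :
    ∫ t : ℝ, (2 * (1 + t ^ 2)⁻¹) • F (cayleyMap (r * cayleyCircle t))
      = (2 * Real.pi) • F Complex.I := by
  have hmean : Real.circleAverage (fun ζ => F (cayleyMap ζ)) 0 r = F (cayleyMap 0) := by
    refine DiffContOnCl.circleAverage (DifferentiableOn.diffContOnCl fun ζ hζ => ?_)
    rw [abs_of_pos h0, closure_ball _ h0.ne', mem_closedBall_zero_iff] at hζ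
    have hζ1 : ‖ζ‖ < 1 := hζ.trans_lt h1
    exact ((hF.differentiableAt (isOpen_upperHalfPlane.mem_nhds (cayleyMap_im_pos hζ1))).comp ζ
      (differentiableAt_cayleyMap
        (one_add_ne_zero_of_norm_lt_one hζ1))).differentiableWithinAt
  rw [cayleyMap_zero, Real.circleAverage_eq_integral_add (-Real.pi),
    intervalIntegral.integral_comp_add_right (fun θ => F (cayleyMap (circleMap 0 r θ))),
    zero_add, show 2 * Real.pi + -Real.pi = Real.pi by ring] at hmean
  simp only [circleMap, zero_add] at hmean
  rw [← intervalIntegral_exp_mul_I_eq_integral_cayleyCircle fun ζ => F (cayleyMap (r * ζ)),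
    ← hmean, smul_inv_smul₀ Real.two_pi_pos.ne']

lemma norm_mul_cayleyCircle_lt_one {r : ℝ} (h0 : 0 < r) (h1 : r < 1) (t : ℝ) :
    ‖(r : ℂ) * cayleyCircle t‖ < 1 := by
  rwa [norm_mul, norm_cayleyCircle, mul_one, Complex.norm_real, Real.norm_of_nonneg h0.le]

lemma tendsto_cayleyMap_mul_cayleyCircle (t : ℝ) :
    Tendsto (fun r : ℝ => cayleyMap (r * cayleyCircle t)) (𝓝[<] 1) (𝓝[{z | 0 < z.im}] t) := by
  refine tendsto_nhdsWithin_iff.2 ⟨?_, ?_⟩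
  · have hcont : ContinuousAt (fun r : ℝ => cayleyMap (r * cayleyCircle t)) 1 := by
      refine ContinuousAt.comp (g := cayleyMap) (DifferentiableAt.continuousAt (𝕜 := ℂ)
        (differentiableAt_cayleyMap ?_)) (by fun_prop)
      simpa using one_add_cayleyCircle_ne_zero t
    have hlim := hcont.tendsto
    rw [Complex.ofReal_one, one_mul, cayleyMap_cayleyCircle] at hlim
    exact hlim.mono_left nhdsWithin_le_nhds
  · filter_upwards [Ioo_mem_nhdsLT (zero_lt_one' ℝ)] with r hr
    exact cayleyMap_im_pos (norm_mul_cayleyCircle_lt_one hr.1 hr.2 t)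

lemma continuous_cayleyMap_mul_cayleyCircle {r : ℝ} (h0 : 0 < r) (h1 : r < 1) :
    Continuous fun t : ℝ => cayleyMap (r * cayleyCircle t) := by
  have hcirc : Continuous cayleyCircle :=
    Continuous.div (by fun_prop) (by fun_prop) one_sub_ofReal_mul_I_ne_zero
  refine continuous_iff_continuousAt.2 fun t => ?_
  exact (differentiableAt_cayleyMap (one_add_ne_zero_of_norm_lt_one
    (norm_mul_cayleyCircle_lt_one h0 h1 t))).continuousAt.comp
      (f := fun t => (r : ℂ) * cayleyCircle t) (by fun_prop)

lemma integral_inv_one_add_sq_smul_eq [CompleteSpace E] {F : ℂ → E} {M : ℝ}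
    (hF : DiffContOnCl ℂ F {z | 0 < z.im}) (hM : ∀ z : ℂ, 0 < z.im → ‖F z‖ ≤ M) :
    ∫ t : ℝ, (1 + t ^ 2)⁻¹ • F t = Real.pi • F Complex.I := by
  have hr : ∀ᶠ r : ℝ in 𝓝[<] 1, 0 < r ∧ r < 1 := Ioo_mem_nhdsLT (zero_lt_one' ℝ)
  have him : ∀ {r : ℝ}, 0 < r ∧ r < 1 → ∀ t, 0 < (cayleyMap (r * cayleyCircle t)).im :=
    fun hr t => cayleyMap_im_pos (norm_mul_cayleyCircle_lt_one hr.1 hr.2 t)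
  have hlim : Tendsto (fun r : ℝ => ∫ t : ℝ, (2 * (1 + t ^ 2)⁻¹) •
      F (cayleyMap (r * cayleyCircle t))) (𝓝[<] 1)
      (𝓝 (∫ t : ℝ, (2 * (1 + t ^ 2)⁻¹) • F t)) := by
    refine tendsto_integral_filter_of_dominated_convergence (fun t => 2 * (1 + t ^ 2)⁻¹ * M)
      ?_ ?_ ((integrable_inv_one_add_sq.const_mul 2).mul_const M) (.of_forall fun t => ?_)
    · filter_upwards [hr] with r hr
      have hweight : Continuous fun t : ℝ => 2 * (1 + t ^ 2)⁻¹ := by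
        fun_prop (disch := intros; positivity)
      exact (hweight.smul (hF.continuousOn.comp_continuous
        (continuous_cayleyMap_mul_cayleyCircle hr.1 hr.2)
        fun t => subset_closure (him hr t))).aestronglyMeasurable
    · filter_upwards [hr] with r hr
      refine Eventually.of_forall fun t => ?_
      rw [norm_smul, Real.norm_of_nonneg (by positivity)]
      gcongr
      exact hM _ (him hr t)
    · have hmem : (t : ℂ) ∈ closure {z : ℂ | 0 < z.im} := by simp
      have hcayley := (tendsto_cayleyMap_mul_cayleyCircle t).mono_right
        (nhdsWithin_mono _ subset_closure)
      exact ((hF.continuousOn t hmem).tendsto.comp hcayley).const_smul _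
  have hconst := tendsto_const_nhds.congr' (hr.mono fun r hr =>
    (integral_comp_cayleyMap_mul_cayleyCircle hF.differentiableOn hr.1 hr.2).symm)
  have heq := tendsto_nhds_unique hlim hconst
  simp_rw [mul_smul] at heq
  rw [integral_smul] at heq
  exact smul_right_injective E (two_ne_zero' ℝ) heq

end Cayley

section PoissonKernel

/-- The Poisson kernel `y/(s² + y²)` of the upper half-plane, normalised to have integral `π`. -/
def poissonKer (y s : ℝ) : ℝ := y / (s ^ 2 + y ^ 2)

/-- The conjugate Poisson kernel `s/(s² + y²)` of the upper half-plane. -/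
def conjPoissonKer (y s : ℝ) : ℝ := s / (s ^ 2 + y ^ 2)

variable {y : ℝ}

lemma poissonKer_nonneg (hy : 0 < y) (s : ℝ) : 0 ≤ poissonKer y s := by
  unfold poissonKer
  positivity

lemma poissonKer_le_inv (hy : 0 < y) (s : ℝ) : poissonKer y s ≤ 1 / y := by
  rw [poissonKer, div_le_div_iff₀ (by positivity) hy]
  nlinarith [sq_nonneg s]

lemma abs_conjPoissonKer_le_inv (hy : 0 < y) (s : ℝ) : |conjPoissonKer y s| ≤ 1 / y := by
  rw [conjPoissonKer, abs_div, abs_of_pos (by positivity : 0 < s ^ 2 + y ^ 2),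
    div_le_div_iff₀ (by positivity) hy, ← sq_abs s]
  nlinarith [sq_nonneg (|s| - y), sq_nonneg (|s|)]

lemma continuous_poissonKer (hy : 0 < y) : Continuous (poissonKer y) := by
  unfold poissonKer
  exact Continuous.div (by fun_prop) (by fun_prop) fun s => by positivity

lemma continuous_conjPoissonKer (hy : 0 < y) : Continuous (conjPoissonKer y) := by
  unfold conjPoissonKer
  exact Continuous.div (by fun_prop) (by fun_prop) fun s => by positivity

lemma poissonKer_neg (y s : ℝ) : poissonKer y (-s) = poissonKer y s := by
  rw [poissonKer, poissonKer, neg_sq]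

lemma conjPoissonKer_neg (y s : ℝ) : conjPoissonKer y (-s) = -conjPoissonKer y s := by
  rw [conjPoissonKer, conjPoissonKer, neg_sq, neg_div]

lemma poissonKer_eq_inv_mul (hy : 0 < y) (s : ℝ) :
    poissonKer y s = y⁻¹ * (1 + (y⁻¹ * s) ^ 2)⁻¹ := by
  rw [poissonKer]
  field_simp
  ring

lemma integrable_poissonKer_sub (hy : 0 < y) (t : ℝ) :
    Integrable fun x => poissonKer y (x - t) := by
  simp_rw [poissonKer_eq_inv_mul hy]
  exact ((integrable_inv_one_add_sq.comp_mul_left' (inv_ne_zero hy.ne')).const_mul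
    y⁻¹).comp_sub_right t

lemma integral_comp_add_mul {E : Type*} [NormedAddCommGroup E] [NormedSpace ℝ E] (g : ℝ → E)
    (hy : 0 < y) (t : ℝ) : y • ∫ x, g (t + y * x) = ∫ x, g x := by
  rw [Measure.integral_comp_mul_left (fun x => g (t + x)), abs_of_pos (inv_pos.2 hy),
    smul_inv_smul₀ hy.ne', integral_add_left_eq_self g t]

lemma mul_poissonKer_sub_add_mul (hy : 0 < y) (t x : ℝ) :
    y * poissonKer y (t + y * x - t) = (1 + x ^ 2)⁻¹ := by
  rw [poissonKer]
  field_simp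
  ring

lemma integral_poissonKer_sub_smul {E : Type*} [NormedAddCommGroup E] [NormedSpace ℝ E]
    (g : ℝ → E) (hy : 0 < y) (t : ℝ) :
    ∫ x, poissonKer y (x - t) • g x = ∫ x, (1 + x ^ 2)⁻¹ • g (t + y * x) := by
  rw [← integral_comp_add_mul _ hy t, ← integral_smul]
  simp_rw [smul_smul, mul_poissonKer_sub_add_mul hy]

lemma integral_poissonKer_sub (hy : 0 < y) (t : ℝ) :
    ∫ x, poissonKer y (x - t) = Real.pi := by
  simpa [integral_univ_inv_one_add_sq] using integral_poissonKer_sub_smul (fun _ => (1 : ℝ)) hy t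

lemma integral_poissonKer_smul_eq {E : Type*} [NormedAddCommGroup E] [NormedSpace ℂ E]
    [CompleteSpace E] {F : ℂ → E} {M : ℝ} (hF : DiffContOnCl ℂ F {z | 0 < z.im})
    (hM : ∀ z : ℂ, 0 < z.im → ‖F z‖ ≤ M) (hy : 0 < y) (t : ℝ) :
    ∫ x : ℝ, poissonKer y (x - t) • F x = Real.pi • F (t + y * Complex.I) := by
  rw [integral_poissonKer_sub_smul (fun x : ℝ => F x) hy t]
  have hmaps : MapsTo (fun z : ℂ => t + y * z) {z | 0 < z.im} {z | 0 < z.im} := fun z hz => by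
    simpa using mul_pos hy hz
  have hcomp : DiffContOnCl ℂ (fun z : ℂ => F (t + y * z)) {z | 0 < z.im} :=
    hF.comp (Differentiable.diffContOnCl (by fun_prop)) hmaps
  simpa using integral_inv_one_add_sq_smul_eq hcomp fun z hz => hM _ (hmaps hz)

end PoissonKernel

section LebesguePoint

lemma exists_abs_le_and_poissonKer_le {y : ℝ} (hy : 0 < y) (s : ℝ) :
    ∃ k : ℕ, |s| ≤ 2 ^ k * y ∧ poissonKer y s ≤ 4 / (4 ^ k * y) := by
  classical
  have hex : ∃ k : ℕ, |s| ≤ 2 ^ k * y := by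
    obtain ⟨k, hk⟩ := pow_unbounded_of_one_lt (|s| / y) one_lt_two
    exact ⟨k, ((div_lt_iff₀ hy).1 hk).le⟩
  refine ⟨Nat.find hex, Nat.find_spec hex, ?_⟩
  rcases h : Nat.find hex with _ | k
  · refine (poissonKer_le_inv hy s).trans ?_
    rw [pow_zero, one_mul]
    gcongr
    norm_num
  · have hk : 2 ^ k * y < |s| := not_le.1 (Nat.find_min hex (by omega))
    have h4 : (4 : ℝ) ^ k * y ^ 2 ≤ s ^ 2 := by
      calc (4 : ℝ) ^ k * y ^ 2 = (2 ^ k * y) ^ 2 := by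
            rw [mul_pow, ← pow_mul, mul_comm k 2, pow_mul]
            norm_num
        _ ≤ |s| ^ 2 := by gcongr
        _ = s ^ 2 := sq_abs s
    rw [poissonKer, div_le_div_iff₀ (by positivity) (by positivity), pow_succ]
    nlinarith [sq_nonneg y]

lemma setIntegral_closedBall_eq_mul_average (u : ℝ → ℝ) (t : ℝ) {r : ℝ} (hr : 0 < r) :
    ∫ x in Metric.closedBall t r, u x = 2 * r * ⨍ x in Metric.closedBall t r, u x := by
  rw [setAverage_eq, Real.volume_real_closedBall hr.le, smul_eq_mul]
  field_simp

lemma lintegral_indicator_closedBall_mul {u : ℝ → ℝ} (hu0 : ∀ x, 0 ≤ u x)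
    (hu : LocallyIntegrable u) (t : ℝ) {r c : ℝ} (hr : 0 < r) (hc : 0 ≤ c) :
    ∫⁻ x, (Metric.closedBall t r).indicator
        (fun x => ENNReal.ofReal c * ENNReal.ofReal (u x)) x =
      ENNReal.ofReal (c * (2 * r * ⨍ x in Metric.closedBall t r, u x)) := by
  rw [lintegral_indicator Metric.isClosed_closedBall.measurableSet,
    lintegral_const_mul'' _ hu.aestronglyMeasurable.aemeasurable.ennreal_ofReal.restrict,
    ← ofReal_integral_eq_lintegral_ofReal
      (hu.integrableOn_isCompact (isCompact_closedBall t r)) (.of_forall hu0),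
    setIntegral_closedBall_eq_mul_average u t hr, ← ENNReal.ofReal_mul hc]

lemma integral_poissonKer_mul_le_tsum {u : ℝ → ℝ} (hu0 : ∀ x, 0 ≤ u x)
    (hu : LocallyIntegrable u) {y : ℝ} (hy : 0 < y) (t : ℝ)
    (hsum : Summable fun k : ℕ =>
      8 * (1 / 2 : ℝ) ^ k * ⨍ x in Metric.closedBall t (2 ^ k * y), u x) :
    ∫ x, poissonKer y (x - t) * u x ≤
      ∑' k : ℕ, 8 * (1 / 2) ^ k * ⨍ x in Metric.closedBall t (2 ^ k * y), u x := by
  have hterm : ∀ k : ℕ, 0 ≤ 8 * (1 / 2 : ℝ) ^ k * ⨍ x in Metric.closedBall t (2 ^ k * y), u x :=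
    fun k => mul_nonneg (by positivity) (integral_nonneg hu0)
  have hmeas : AEMeasurable fun x => ENNReal.ofReal (u x) :=
    hu.aestronglyMeasurable.aemeasurable.ennreal_ofReal
  rw [integral_eq_lintegral_of_nonneg_ae
    (Eventually.of_forall fun x => mul_nonneg (poissonKer_nonneg hy _) (hu0 _))
    ((continuous_poissonKer hy).comp (continuous_sub_right t)
      |>.aestronglyMeasurable.mul hu.aestronglyMeasurable)]
  refine ENNReal.toReal_le_of_le_ofReal (tsum_nonneg hterm) ?_
  calc ∫⁻ x, ENNReal.ofReal (poissonKer y (x - t) * u x)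
      ≤ ∫⁻ x, ∑' k : ℕ, (Metric.closedBall t (2 ^ k * y)).indicator
          (fun x => ENNReal.ofReal (4 / (4 ^ k * y)) * ENNReal.ofReal (u x)) x := by
        refine lintegral_mono fun x => ?_
        obtain ⟨k, hmem, hle⟩ := exists_abs_le_and_poissonKer_le hy (x - t)
        refine le_trans ?_ (ENNReal.le_tsum k)
        rw [indicator_of_mem (by rwa [Metric.mem_closedBall, Real.dist_eq]),
          ← ENNReal.ofReal_mul (by positivity)]
        exact ENNReal.ofReal_le_ofReal (mul_le_mul_of_nonneg_right hle (hu0 _))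
    _ = ∑' k : ℕ, ∫⁻ x, (Metric.closedBall t (2 ^ k * y)).indicator
          (fun x => ENNReal.ofReal (4 / (4 ^ k * y)) * ENNReal.ofReal (u x)) x :=
        lintegral_tsum fun k =>
          (hmeas.const_mul _).indicator Metric.isClosed_closedBall.measurableSet
    _ = ∑' k : ℕ, ENNReal.ofReal
          (8 * (1 / 2) ^ k * ⨍ x in Metric.closedBall t (2 ^ k * y), u x) := by
        congr 1 with k
        rw [lintegral_indicator_closedBall_mul hu0 hu t (by positivity) (by positivity),
          show (4 : ℝ) = 2 * 2 by norm_num, mul_pow, one_div, inv_pow]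
        congr 1
        field_simp
        ring
    _ = _ := (ENNReal.ofReal_tsum_of_nonneg hterm hsum).symm

lemma tendsto_integral_poissonKer_mul_zero {u : ℝ → ℝ} (hu0 : ∀ x, 0 ≤ u x)
    (hu : LocallyIntegrable u) {t K : ℝ}
    (hK : ∀ r, 0 < r → ⨍ x in Metric.closedBall t r, u x ≤ K)
    (ht : Tendsto (fun r => ⨍ x in Metric.closedBall t r, u x) (𝓝[>] 0) (𝓝 0)) :
    Tendsto (fun y => ∫ x, poissonKer y (x - t) * u x) (𝓝[>] 0) (𝓝 0) := by
  have hdom : Summable fun k : ℕ => 8 * (1 / 2 : ℝ) ^ k * K :=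
    (summable_geometric_two.mul_left 8).mul_right K
  have hnonneg : ∀ (y : ℝ) (k : ℕ),
      0 ≤ 8 * (1 / 2 : ℝ) ^ k * ⨍ x in Metric.closedBall t (2 ^ k * y), u x :=
    fun y k => mul_nonneg (by positivity) (integral_nonneg hu0)
  have hle : ∀ y : ℝ, 0 < y → ∀ k : ℕ,
      8 * (1 / 2 : ℝ) ^ k * ⨍ x in Metric.closedBall t (2 ^ k * y), u x
        ≤ 8 * (1 / 2 : ℝ) ^ k * K := fun y hy k => by
    gcongr
    exact hK _ (by positivity)
  have hlim : Tendsto (fun y => ∑' k : ℕ, 8 * (1 / 2 : ℝ) ^ k *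
      ⨍ x in Metric.closedBall t (2 ^ k * y), u x) (𝓝[>] 0) (𝓝 (∑' _ : ℕ, (0 : ℝ))) := by
    refine tendsto_tsum_of_dominated_convergence hdom (fun k => ?_) ?_
    · have hscale : Tendsto (fun y : ℝ => 2 ^ k * y) (𝓝[>] 0) (𝓝[>] 0) := by
        refine tendsto_nhdsWithin_iff.2 ⟨?_, ?_⟩
        · have := (continuous_const_mul ((2 : ℝ) ^ k)).tendsto 0
          rw [mul_zero] at this
          exact this.mono_left nhdsWithin_le_nhds
        · filter_upwards [self_mem_nhdsWithin] with y (hy : 0 < y)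
          exact mem_Ioi.2 (by positivity)
      simpa using (ht.comp hscale).const_mul (8 * (1 / 2 : ℝ) ^ k)
    · filter_upwards [self_mem_nhdsWithin] with y hy k
      rw [Real.norm_of_nonneg (hnonneg y k)]
      exact hle y hy k
  rw [tsum_zero] at hlim
  refine squeeze_zero' ?_ ?_ hlim <;> filter_upwards [self_mem_nhdsWithin] with y (hy : 0 < y)
  · exact integral_nonneg fun x => mul_nonneg (poissonKer_nonneg hy _) (hu0 _)
  · exact integral_poissonKer_mul_le_tsum hu0 hu hy t
      (hdom.of_nonneg_of_le (hnonneg y) (hle y hy))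

variable {E : Type*} [NormedAddCommGroup E]

lemma average_closedBall_norm_sub_le {f : ℝ → E} (hf : Integrable f) (c : E) (t : ℝ) {r : ℝ}
    (hr : 0 < r) :
    ⨍ x in Metric.closedBall t r, ‖f x - c‖ ≤ (∫ x, ‖f x‖) / (2 * r) + ‖c‖ := by
  have hconst : IntegrableOn (fun _ : ℝ => c) (Metric.closedBall t r) :=
    integrableOn_const measure_closedBall_lt_top.ne
  have hbound : ∫ x in Metric.closedBall t r, ‖f x - c‖ ≤ (∫ x, ‖f x‖) + 2 * r * ‖c‖ :=
    calc ∫ x in Metric.closedBall t r, ‖f x - c‖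
        ≤ ∫ x in Metric.closedBall t r, (‖f x‖ + ‖c‖) :=
          integral_mono (hf.integrableOn.sub hconst).norm
            (hf.norm.integrableOn.add hconst.norm) fun x => norm_sub_le _ _
      _ = (∫ x in Metric.closedBall t r, ‖f x‖) + 2 * r * ‖c‖ := by
          rw [integral_add hf.norm.integrableOn hconst.norm, setIntegral_const,
            Real.volume_real_closedBall hr.le, smul_eq_mul]
      _ ≤ (∫ x, ‖f x‖) + 2 * r * ‖c‖ := by
          exact add_le_add_left (setIntegral_le_integral hf.norm
            (Eventually.of_forall fun x => norm_nonneg _)) _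
  rw [setIntegral_closedBall_eq_mul_average _ t hr] at hbound
  have h2r : 0 < 2 * r := by positivity
  rw [div_add' _ _ _ h2r.ne', le_div_iff₀ h2r]
  linarith

lemma exists_average_closedBall_norm_sub_le {f : ℝ → E} (hf : Integrable f) {c : E} {t : ℝ}
    (ht : Tendsto (fun r => ⨍ x in Metric.closedBall t r, ‖f x - c‖) (𝓝[>] 0) (𝓝 0)) :
    ∃ K, ∀ r, 0 < r → ⨍ x in Metric.closedBall t r, ‖f x - c‖ ≤ K := by
  obtain ⟨ρ, hρ, hsmall⟩ := mem_nhdsGT_iff_exists_Ioo_subset.1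
    (ht.eventually (gt_mem_nhds one_pos))
  refine ⟨max 1 ((∫ x, ‖f x‖) / (2 * ρ) + ‖c‖), fun r hr => ?_⟩
  rcases lt_or_ge r ρ with hrρ | hrρ
  · exact (hsmall ⟨hr, hrρ⟩ : _ < (1 : ℝ)).le.trans (le_max_left _ _)
  · refine (average_closedBall_norm_sub_le hf c t hr).trans (le_max_of_le_right ?_)
    have : (0 : ℝ) < ρ := hρ
    gcongr

lemma ae_tendsto_integral_poissonKer_mul_norm_sub {f : ℝ → E} (hf : Integrable f) :
    ∀ᵐ t : ℝ, Tendsto (fun y => ∫ x, poissonKer y (x - t) * ‖f x - f t‖) (𝓝[>] 0) (𝓝 0) := by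
  filter_upwards [IsUnifLocDoublingMeasure.ae_tendsto_average_norm_sub (μ := volume)
    hf.locallyIntegrable 1] with t ht
  have havg : Tendsto (fun r => ⨍ x in Metric.closedBall t r, ‖f x - f t‖) (𝓝[>] 0) (𝓝 0) := by
    refine ht (fun _ => t) (fun r => r) tendsto_id ?_
    filter_upwards [self_mem_nhdsWithin] with r (hr : 0 < r)
    exact Metric.mem_closedBall_self (by linarith)
  obtain ⟨K, hK⟩ := exists_average_closedBall_norm_sub_le hf havg
  exact tendsto_integral_poissonKer_mul_zero (fun x => norm_nonneg _)
    (fun x => (hf.locallyIntegrable.sub (locallyIntegrable_const (f t)) x).norm) hK havg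

end LebesguePoint

section Kernels

variable {E : Type*} [NormedAddCommGroup E] [NormedSpace ℝ E] {f : ℝ → E} {y : ℝ}

/-- The Poisson integral of `f` at the point `t + iy`, equal to `π` times the harmonic extension
of `f`. -/
def poissonInt (f : ℝ → E) (y t : ℝ) : E := ∫ x, poissonKer y (x - t) • f x

/-- The conjugate Poisson integral of `f` at the point `t + iy`, with the sign of the kernel
`1/(x - t)`. -/
def conjPoissonInt (f : ℝ → E) (y t : ℝ) : E := ∫ x, conjPoissonKer y (x - t) • f x

/-- The Hilbert transform of `f` at `t` truncated at distance `ε`, without the factor `1/π`. -/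
def truncHilbert (f : ℝ → E) (ε t : ℝ) : E := ∫ x in {x | ε ≤ |x - t|}, (x - t)⁻¹ • f x

lemma integrable_poissonKer_smul (hf : Integrable f) (hy : 0 < y) (t : ℝ) :
    Integrable fun x => poissonKer y (x - t) • f x :=
  hf.bdd_smul (1 / y)
    ((continuous_poissonKer hy).comp (continuous_sub_right t)).aestronglyMeasurable
    (Eventually.of_forall fun x => by
      rw [Real.norm_of_nonneg (poissonKer_nonneg hy _)]
      exact poissonKer_le_inv hy _)

lemma integrable_conjPoissonKer_smul (hf : Integrable f) (hy : 0 < y) (t : ℝ) :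
    Integrable fun x => conjPoissonKer y (x - t) • f x :=
  hf.bdd_smul (1 / y)
    ((continuous_conjPoissonKer hy).comp (continuous_sub_right t)).aestronglyMeasurable
    (Eventually.of_forall fun _ => abs_conjPoissonKer_le_inv hy _)

lemma integrable_poissonKer_mul_norm_sub (hf : Integrable f) (hy : 0 < y) (t : ℝ) (c : E) :
    Integrable fun x => poissonKer y (x - t) * ‖f x - c‖ := by
  refine ((integrable_poissonKer_smul hf hy t).sub
    ((integrable_poissonKer_sub hy t).smul_const c)).norm.congr (Eventually.of_forall fun x => ?_)
  dsimp only [Pi.sub_apply]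
  rw [← smul_sub, norm_smul, Real.norm_of_nonneg (poissonKer_nonneg hy _)]

lemma ae_tendsto_poissonInt [CompleteSpace E] (hf : Integrable f) :
    ∀ᵐ t : ℝ, Tendsto (fun y => poissonInt f y t) (𝓝[>] 0) (𝓝 (Real.pi • f t)) := by
  filter_upwards [ae_tendsto_integral_poissonKer_mul_norm_sub hf] with t ht
  rw [tendsto_iff_norm_sub_tendsto_zero]
  refine squeeze_zero' (Eventually.of_forall fun _ => norm_nonneg _) ?_ ht
  filter_upwards [self_mem_nhdsWithin] with y (hy : 0 < y)
  rw [← integral_poissonKer_sub hy t, ← integral_smul_const, poissonInt,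
    ← integral_sub (integrable_poissonKer_smul hf hy t)
      ((integrable_poissonKer_sub hy t).smul_const _)]
  refine (norm_integral_le_integral_norm _).trans_eq (integral_congr_ae (.of_forall fun x => ?_))
  dsimp only
  rw [← smul_sub, norm_smul, Real.norm_of_nonneg (poissonKer_nonneg hy _)]

/-- The difference between the kernel `1/s` truncated at distance `y` and the conjugate Poisson
kernel. It is odd and dominated by the Poisson kernel, so it does not contribute in the limit. -/
def truncSubConjPoissonKer (y s : ℝ) : ℝ :=
  {s : ℝ | y ≤ |s|}.indicator (fun s => s⁻¹) s - conjPoissonKer y s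

lemma truncSubConjPoissonKer_neg (y s : ℝ) :
    truncSubConjPoissonKer y (-s) = -truncSubConjPoissonKer y s := by
  simp only [truncSubConjPoissonKer, conjPoissonKer_neg, indicator, mem_ofPred_eq, abs_neg]
  split_ifs <;> ring

lemma abs_truncSubConjPoissonKer_le (hy : 0 < y) (s : ℝ) :
    |truncSubConjPoissonKer y s| ≤ poissonKer y s := by
  have hp : 0 < s ^ 2 + y ^ 2 := by positivity
  rw [truncSubConjPoissonKer, poissonKer]
  by_cases h : y ≤ |s|
  · have hs : s ≠ 0 := abs_pos.1 (hy.trans_le h)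
    have hdiff : s⁻¹ - conjPoissonKer y s = y ^ 2 / (s * (s ^ 2 + y ^ 2)) := by
      rw [conjPoissonKer]
      field_simp
      ring
    rw [indicator_of_mem (by exact h), hdiff, abs_div, abs_mul, abs_of_pos hp,
      abs_of_pos (by positivity : 0 < y ^ 2), div_le_div_iff₀ (by positivity) hp]
    nlinarith [mul_le_mul_of_nonneg_left h (by positivity : 0 ≤ y * (s ^ 2 + y ^ 2))]
  · rw [indicator_of_notMem (by exact h), zero_sub, abs_neg, conjPoissonKer, abs_div,
      abs_of_pos hp]
    gcongr
    exact (not_le.1 h).le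

lemma measurable_truncSubConjPoissonKer (hy : 0 < y) : Measurable (truncSubConjPoissonKer y) :=
  (measurable_inv.indicator (measurableSet_le measurable_const measurable_norm)).sub
    (continuous_conjPoissonKer hy).measurable

lemma integrable_truncSubConjPoissonKer_sub (hy : 0 < y) (t : ℝ) :
    Integrable fun x => truncSubConjPoissonKer y (x - t) :=
  (integrable_poissonKer_sub hy t).mono'
    ((measurable_truncSubConjPoissonKer hy).comp (measurable_sub_const t)).aestronglyMeasurable
    (Eventually.of_forall fun _ => abs_truncSubConjPoissonKer_le hy _)

lemma integrable_truncSubConjPoissonKer_smul (hf : Integrable f) (hy : 0 < y) (t : ℝ) :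
    Integrable fun x => truncSubConjPoissonKer y (x - t) • f x :=
  hf.bdd_smul (1 / y)
    ((measurable_truncSubConjPoissonKer hy).comp (measurable_sub_const t)).aestronglyMeasurable
    (Eventually.of_forall fun _ =>
      (abs_truncSubConjPoissonKer_le hy _).trans (poissonKer_le_inv hy _))

lemma integral_truncSubConjPoissonKer_sub (y t : ℝ) :
    ∫ x, truncSubConjPoissonKer y (x - t) = 0 := by
  have hodd := integral_neg_eq_self (truncSubConjPoissonKer y) volume
  simp_rw [truncSubConjPoissonKer_neg, integral_neg] at hodd
  rw [integral_sub_right_eq_self (truncSubConjPoissonKer y) t]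
  linarith

lemma measurableSet_le_abs_sub (ε t : ℝ) : MeasurableSet {x : ℝ | ε ≤ |x - t|} :=
  measurableSet_le measurable_const (measurable_sub_const t).norm

lemma truncHilbert_eq_conjPoissonInt_add (hf : Integrable f) (hy : 0 < y) (t : ℝ) :
    truncHilbert f y t
      = conjPoissonInt f y t + ∫ x, truncSubConjPoissonKer y (x - t) • f x := by
  rw [truncHilbert, conjPoissonInt, ← integral_indicator (measurableSet_le_abs_sub y t),
    ← integral_add (integrable_conjPoissonKer_smul hf hy t)
      (integrable_truncSubConjPoissonKer_smul hf hy t)]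
  refine integral_congr_ae (.of_forall fun x => ?_)
  dsimp only
  rw [← add_smul, truncSubConjPoissonKer, add_sub_cancel]
  by_cases h : y ≤ |x - t|
  · rw [indicator_of_mem (by exact h), indicator_of_mem (by exact h)]
  · rw [indicator_of_notMem (by exact h), indicator_of_notMem (by exact h), zero_smul]

lemma ae_tendsto_truncHilbert_sub_conjPoissonInt [CompleteSpace E] (hf : Integrable f) :
    ∀ᵐ t : ℝ, Tendsto (fun y => truncHilbert f y t - conjPoissonInt f y t) (𝓝[>] 0) (𝓝 0) := by
  filter_upwards [ae_tendsto_integral_poissonKer_mul_norm_sub hf] with t ht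
  refine squeeze_zero_norm' ?_ ht
  filter_upwards [self_mem_nhdsWithin] with y (hy : 0 < y)
  have hcentre : ∫ x, truncSubConjPoissonKer y (x - t) • f x
      = ∫ x, truncSubConjPoissonKer y (x - t) • (f x - f t) := by
    simp_rw [smul_sub]
    rw [integral_sub (integrable_truncSubConjPoissonKer_smul hf hy t)
      ((integrable_truncSubConjPoissonKer_sub hy t).smul_const _), integral_smul_const,
      integral_truncSubConjPoissonKer_sub, zero_smul, sub_zero]
  rw [truncHilbert_eq_conjPoissonInt_add hf hy t, add_sub_cancel_left, hcentre]
  refine norm_integral_le_of_norm_le (integrable_poissonKer_mul_norm_sub hf hy t (f t))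
    (Eventually.of_forall fun x => ?_)
  rw [norm_smul]
  exact mul_le_mul_of_nonneg_right (abs_truncSubConjPoissonKer_le hy _) (norm_nonneg _)

end Kernels

section CauchyIntegral

/-- The Cauchy integral of a real function `f`, a holomorphic function on the upper half-plane
whose real and imaginary parts are the conjugate Poisson and the Poisson integral of `f`. -/
def cauchyInt (f : ℝ → ℝ) (z : ℂ) : ℂ := ∫ x : ℝ, (f x : ℂ) / (x - z)

variable {f g : ℝ → ℝ} {y : ℝ}

lemma im_le_norm_ofReal_sub (x : ℝ) (z : ℂ) : z.im ≤ ‖(x : ℂ) - z‖ := by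
  have h := Complex.abs_im_le_norm (x - z)
  rw [Complex.sub_im, Complex.ofReal_im, zero_sub, abs_neg] at h
  exact (le_abs_self _).trans h

lemma ofReal_sub_ne_zero (x : ℝ) {z : ℂ} (hz : 0 < z.im) : (x : ℂ) - z ≠ 0 :=
  norm_pos_iff.1 (hz.trans_le (im_le_norm_ofReal_sub x z))

lemma aestronglyMeasurable_ofReal_div (hf : AEStronglyMeasurable f) {k : ℝ → ℂ}
    (hk : Measurable k) : AEStronglyMeasurable fun x => (f x : ℂ) / k x :=
  ((Complex.measurable_ofReal.comp_aemeasurable hf.aemeasurable).div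
    hk.aemeasurable).aestronglyMeasurable

lemma norm_ofReal_div_sub_pow_le (f : ℝ → ℝ) {z : ℂ} {c : ℝ} (hc : 0 < c) (hz : c ≤ z.im) (n : ℕ)
    (x : ℝ) : ‖(f x : ℂ) / (x - z) ^ n‖ ≤ |f x| / c ^ n := by
  rw [norm_div, Complex.norm_real, Real.norm_eq_abs, norm_pow]
  have := hz.trans (im_le_norm_ofReal_sub x z)
  gcongr

lemma integrable_ofReal_div_sub (hf : Integrable f) {z : ℂ} (hz : 0 < z.im) :
    Integrable fun x : ℝ => (f x : ℂ) / (x - z) :=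
  (hf.abs.div_const z.im).mono' (aestronglyMeasurable_ofReal_div hf.1 (by fun_prop))
    (Eventually.of_forall fun x => by simpa using norm_ofReal_div_sub_pow_le f hz le_rfl 1 x)

lemma norm_cauchyInt_le (hf : Integrable f) {z : ℂ} (hz : 0 < z.im) :
    ‖cauchyInt f z‖ ≤ (∫ x, |f x|) / z.im := by
  rw [← integral_div]
  exact norm_integral_le_of_norm_le (hf.abs.div_const _)
    (Eventually.of_forall fun x => by simpa using norm_ofReal_div_sub_pow_le f hz le_rfl 1 x)

lemma differentiableAt_cauchyInt (hf : Integrable f) {z : ℂ} (hz : 0 < z.im) :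
    DifferentiableAt ℂ (cauchyInt f) z := by
  have hnhds : {w : ℂ | z.im / 2 < w.im} ∈ 𝓝 z :=
    (isOpen_lt continuous_const Complex.continuous_im).mem_nhds (half_lt_self hz)
  refine (hasDerivAt_integral_of_dominated_loc_of_deriv_le (μ := volume) (𝕜 := ℂ)
    (F := fun z x => (f x : ℂ) / (x - z)) (F' := fun z x => (f x : ℂ) / (x - z) ^ 2) (x₀ := z)
    (bound := fun x => |f x| / (z.im / 2) ^ 2) hnhds
    (Eventually.of_forall fun w => aestronglyMeasurable_ofReal_div hf.1 (by fun_prop))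
    (integrable_ofReal_div_sub hf hz) (aestronglyMeasurable_ofReal_div hf.1 (by fun_prop))
    (Eventually.of_forall fun x w hw => norm_ofReal_div_sub_pow_le f (half_pos hz) hw.le 2 x)
    (hf.abs.div_const _) (Eventually.of_forall fun x w hw => ?_)).2.differentiableAt
  have hne : (x : ℂ) - w ≠ 0 := ofReal_sub_ne_zero x ((half_pos hz).trans hw)
  have hsub : HasDerivAt (fun w : ℂ => (x : ℂ) - w) (-1) w := by
    simpa using (hasDerivAt_id w).const_sub (x : ℂ)
  exact ((hasDerivAt_const w (f x : ℂ)).fun_div hsub hne).congr_deriv (by ring)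

lemma ofReal_div_sub_eq (c : ℝ) (hy : 0 < y) (t x : ℝ) :
    (c : ℂ) / (x - (t + y * Complex.I))
      = ((conjPoissonKer y (x - t) * c : ℝ) : ℂ)
        + ((poissonKer y (x - t) * c : ℝ) : ℂ) * Complex.I := by
  have hne := ofReal_sub_ne_zero x (z := t + y * Complex.I) (by simpa using hy)
  have hp : ((x - t : ℂ) ^ 2 + y ^ 2) ≠ 0 := by
    exact_mod_cast (by positivity : (x - t) ^ 2 + y ^ 2 ≠ 0)
  rw [div_eq_iff hne, conjPoissonKer, poissonKer]
  push_cast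
  field_simp
  linear_combination (c : ℂ) * y ^ 2 * Complex.I_sq

lemma cauchyInt_eq (hf : Integrable f) (hy : 0 < y) (t : ℝ) :
    cauchyInt f (t + y * Complex.I)
      = ((conjPoissonInt f y t : ℝ) : ℂ) + ((poissonInt f y t : ℝ) : ℂ) * Complex.I := by
  simp_rw [cauchyInt, ofReal_div_sub_eq _ hy]
  rw [integral_add (integrable_conjPoissonKer_smul hf hy t).ofReal
    ((integrable_poissonKer_smul hf hy t).ofReal.mul_const _), integral_mul_const,
    integral_complex_ofReal, integral_complex_ofReal]
  rfl

lemma cauchyInt_re (hf : Integrable f) (hy : 0 < y) (t : ℝ) :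
    (cauchyInt f (t + y * Complex.I)).re = conjPoissonInt f y t := by
  simp [cauchyInt_eq hf hy]

lemma cauchyInt_im (hf : Integrable f) (hy : 0 < y) (t : ℝ) :
    (cauchyInt f (t + y * Complex.I)).im = poissonInt f y t := by
  simp [cauchyInt_eq hf hy]

lemma continuous_cauchyInt_add_mul_I (hf : Integrable f) (hy : 0 < y) :
    Continuous fun t : ℝ => cauchyInt f (t + y * Complex.I) :=
  continuous_iff_continuousAt.2 fun _ =>
    (differentiableAt_cauchyInt hf (by simpa using hy)).continuousAt.comp
      (f := fun t : ℝ => (t + y * Complex.I : ℂ)) (by fun_prop)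

lemma continuous_conjPoissonInt (hf : Integrable f) (hy : 0 < y) :
    Continuous (conjPoissonInt f y) :=
  (Complex.continuous_re.comp (continuous_cauchyInt_add_mul_I hf hy)).congr fun t =>
    cauchyInt_re hf hy t

lemma continuousOn_conjPoissonInt_right (hf : Integrable f) (t : ℝ) :
    ContinuousOn (fun y => conjPoissonInt f y t) (Ioi 0) := by
  refine ContinuousOn.congr (f := fun y : ℝ => (cauchyInt f (t + y * Complex.I)).re)
    (fun y hy => ContinuousAt.continuousWithinAt ?_) fun y hy => (cauchyInt_re hf hy t).symm
  exact Complex.continuous_re.continuousAt.comp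
    ((differentiableAt_cauchyInt hf (by simpa using hy)).continuousAt.comp
      (f := fun y : ℝ => (t + y * Complex.I : ℂ)) (by fun_prop))

lemma abs_conjPoissonInt_le (hf : Integrable f) (hy : 0 < y) (t : ℝ) :
    |conjPoissonInt f y t| ≤ (∫ x, |f x|) / y := by
  rw [← cauchyInt_re hf hy]
  refine (Complex.abs_re_le_norm _).trans ?_
  simpa using norm_cauchyInt_le hf (z := t + y * Complex.I) (by simpa using hy)

lemma integral_mul_conjPoissonInt (hf : Integrable f) (hg : Integrable g) (hy : 0 < y) :
    ∫ t, g t * conjPoissonInt f y t = -∫ t, f t * conjPoissonInt g y t := by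
  have hinteg : Integrable (fun p : ℝ × ℝ => g p.1 * f p.2 * conjPoissonKer y (p.2 - p.1))
      (volume.prod volume) :=
    (hg.mul_prod hf).mul_bdd (c := 1 / y)
      ((continuous_conjPoissonKer hy).comp
        (continuous_snd.sub continuous_fst)).aestronglyMeasurable
      (Eventually.of_forall fun p => abs_conjPoissonKer_le_inv hy _)
  calc ∫ t, g t * conjPoissonInt f y t
      = ∫ t, ∫ x, g t * f x * conjPoissonKer y (x - t) := by
        simp_rw [conjPoissonInt, ← integral_const_mul, smul_eq_mul]
        congr! 4
        ring
    _ = ∫ x, ∫ t, g t * f x * conjPoissonKer y (x - t) :=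
        integral_integral_swap (f := fun t x => g t * f x * conjPoissonKer y (x - t)) hinteg
    _ = -∫ x, f x * conjPoissonInt g y x := by
        simp_rw [conjPoissonInt, ← integral_const_mul, smul_eq_mul, ← integral_neg]
        congr 1 with x
        congr 1 with t
        rw [← neg_sub t x, conjPoissonKer_neg]
        ring

lemma integrable_poissonKer_prod (hf : Integrable f) (hy : 0 < y) :
    Integrable (fun p : ℝ × ℝ => poissonKer y (p.2 - p.1) * f p.2) (volume.prod volume) := by
  have hker : Integrable (poissonKer y) := by simpa using integrable_poissonKer_sub hy 0
  refine (hf.convolution_integrand (ContinuousLinearMap.mul ℝ ℝ) hker (μ := volume)).congr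
    (Eventually.of_forall fun p => ?_)
  dsimp only [ContinuousLinearMap.mul_apply']
  rw [← neg_sub p.1 p.2, poissonKer_neg, mul_comm]

lemma integrable_poissonInt (hf : Integrable f) (hy : 0 < y) : Integrable (poissonInt f y) :=
  (integrable_poissonKer_prod hf hy).integral_prod_left

lemma integral_abs_poissonInt_le (hf : Integrable f) (hy : 0 < y) :
    ∫ t, |poissonInt f y t| ≤ Real.pi * ∫ x, |f x| := by
  have habs := integrable_poissonKer_prod hf.abs hy
  calc ∫ t, |poissonInt f y t| ≤ ∫ t, ∫ x, poissonKer y (x - t) * |f x| := by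
        refine integral_mono (integrable_poissonInt hf hy).abs habs.integral_prod_left fun t => ?_
        refine abs_integral_le_integral_abs.trans_eq (integral_congr_ae (.of_forall fun x => ?_))
        dsimp only
        rw [smul_eq_mul, abs_mul, abs_of_nonneg (poissonKer_nonneg hy _)]
    _ = ∫ x, ∫ t, poissonKer y (x - t) * |f x| := integral_integral_swap habs
    _ = ∫ x, Real.pi * |f x| := by
        congr 1 with x
        rw [integral_mul_const, ← integral_poissonKer_sub hy x]
        congr 2 with t
        rw [← neg_sub t x, poissonKer_neg]
    _ = Real.pi * ∫ x, |f x| := integral_const_mul _ _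

lemma abs_poissonInt_le (hf : ∀ x, |f x| ≤ 1) (hy : 0 < y) (t : ℝ) :
    |poissonInt f y t| ≤ Real.pi := by
  rw [← integral_poissonKer_sub hy t, ← Real.norm_eq_abs]
  refine norm_integral_le_of_norm_le (integrable_poissonKer_sub hy t) (.of_forall fun x => ?_)
  rw [norm_smul, Real.norm_of_nonneg (poissonKer_nonneg hy _)]
  exact mul_le_of_le_one_right (poissonKer_nonneg hy _) (hf x)

lemma poissonInt_nonneg (hf : ∀ x, 0 ≤ f x) (hy : 0 < y) (t : ℝ) : 0 ≤ poissonInt f y t :=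
  integral_nonneg fun x => mul_nonneg (poissonKer_nonneg hy _) (hf x)

lemma cauchyInt_im_nonneg (hf : Integrable f) (hf0 : ∀ x, 0 ≤ f x) {z : ℂ} (hz : 0 < z.im) :
    0 ≤ (cauchyInt f z).im := by
  rw [← Complex.re_add_im z, cauchyInt_im hf hz]
  exact poissonInt_nonneg hf0 hz _

lemma diffContOnCl_comp_add_mul_I {E : Type*} [NormedAddCommGroup E] [NormedSpace ℂ E] {F : ℂ → E}
    (hF : DifferentiableOn ℂ F {z | 0 < z.im}) (hy : 0 < y) :
    DiffContOnCl ℂ (fun z => F (z + y * Complex.I)) {z | 0 < z.im} := by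
  refine DifferentiableOn.diffContOnCl fun z hz => DifferentiableAt.differentiableWithinAt ?_
  rw [Complex.closure_setOfPred_lt_im] at hz
  have hpos : 0 < (z + y * Complex.I).im := by simpa using add_pos_of_nonneg_of_pos hz hy
  exact (hF.differentiableAt (isOpen_upperHalfPlane.mem_nhds hpos)).comp z
    (f := fun z => z + y * Complex.I) (by fun_prop)

end CauchyIntegral

lemma exists_tendsto_inner_of_norm_le {H ι : Type*} [NormedAddCommGroup H] [InnerProductSpace ℂ H]
    [CompleteSpace H] (U : Ultrafilter ι) {c : ι → H} {K : ℝ} (hK : ∀ i, ‖c i‖ ≤ K) :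
    ∃ b : H, ∀ g : H, Tendsto (fun i => inner ℂ g (c i)) U (𝓝 (inner ℂ g b)) := by
  let φ : ι → WeakDual ℂ H := fun i => StrongDual.toWeakDual (InnerProductSpace.toDual ℂ H (c i))
  obtain ⟨x, -, hx⟩ :=
    (WeakDual.isCompact_closedBall (𝕜 := ℂ) (E := H) 0 K).ultrafilter_le_nhds (U.map φ) <|
      le_principal_iff.2 <| Ultrafilter.mem_map.2 <| univ_mem' fun i => by
        rw [mem_preimage, mem_preimage, mem_closedBall_zero_iff]
        exact ((InnerProductSpace.toDual ℂ H).norm_map (c i)).trans_le (hK i)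
  refine ⟨(InnerProductSpace.toDual ℂ H).symm (WeakDual.toStrongDual x), fun g => ?_⟩
  have hlim : Tendsto (fun i => inner ℂ (c i) g) U (𝓝 (x g)) :=
    ((WeakDual.eval_continuous (𝕜 := ℂ) g).tendsto x).comp hx
  have hxg : x g = inner ℂ ((InnerProductSpace.toDual ℂ H).symm (WeakDual.toStrongDual x)) g :=
    (InnerProductSpace.toDual_symm_apply (x := g) (y := WeakDual.toStrongDual x)).symm
  rw [hxg] at hlim
  simpa only [Function.comp_def, inner_conj_symm] using
    (Complex.continuous_conj.tendsto _).comp hlim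

lemma exists_memLp_two_tendsto_integral_mul {α ι : Type*} [MeasurableSpace α] {μ : Measure α}
    (U : Ultrafilter ι) {d : ι → α → ℂ} {g : α → ℂ} (hd : ∀ i, AEStronglyMeasurable (d i) μ)
    (hg : MemLp g 2 μ) (hdg : ∀ i x, ‖d i x‖ ≤ ‖g x‖) :
    ∃ b : α → ℂ, MemLp b 2 μ ∧ ∀ φ : α → ℂ, MemLp φ 2 μ →
      Tendsto (fun i => ∫ x, φ x * d i x ∂μ) U (𝓝 (∫ x, φ x * b x ∂μ)) := by
  have hd2 : ∀ i, MemLp (d i) 2 μ := fun i => hg.mono (hd i) (.of_forall (hdg i))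
  obtain ⟨b, hb⟩ := exists_tendsto_inner_of_norm_le U (c := fun i => (hd2 i).toLp _)
    (K := ‖hg.toLp g‖) fun i => by
      refine Lp.norm_le_norm_of_ae_le ?_
      filter_upwards [(hd2 i).coeFn_toLp, hg.coeFn_toLp] with x h1 h2
      rw [h1, h2]
      exact hdg i x
  refine ⟨b, Lp.memLp b, fun φ hφ => ?_⟩
  have hinner : ∀ (v : α → ℂ) (w : Lp ℂ 2 μ), w =ᵐ[μ] v →
      inner ℂ (hφ.star.toLp _) w = ∫ x, φ x * v x ∂μ := by
    intro v w hwv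
    rw [L2.inner_def]
    refine integral_congr_ae ?_
    filter_upwards [hφ.star.coeFn_toLp, hwv] with x h1 h2
    rw [h1, h2, RCLike.inner_apply, Pi.star_apply, starRingEnd_apply, star_star, mul_comm]
  have hlim := hb (hφ.star.toLp _)
  rw [hinner b b (.refl _ _)] at hlim
  exact hlim.congr fun i => hinner (d i) _ (hd2 i).coeFn_toLp

lemma one_le_norm_add_I {z : ℂ} (hz : 0 ≤ z.im) : 1 ≤ ‖z + Complex.I‖ := by
  have h := (le_abs_self _).trans (Complex.abs_im_le_norm (z + Complex.I))
  rw [Complex.add_im, Complex.I_im] at h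
  linarith

lemma add_I_ne_zero {z : ℂ} (hz : 0 ≤ z.im) : z + Complex.I ≠ 0 :=
  norm_pos_iff.1 (one_pos.trans_le (one_le_norm_add_I hz))

lemma memLp_two_inv_ofReal_add_I : MemLp (fun x : ℝ => ((x : ℂ) + Complex.I)⁻¹) 2 := by
  have hc : Continuous fun x : ℝ => ((x : ℂ) + Complex.I)⁻¹ :=
    Continuous.inv₀ (by fun_prop) fun x => add_I_ne_zero (by simp)
  rw [memLp_two_iff_integrable_sq_norm hc.aestronglyMeasurable]
  refine integrable_inv_one_add_sq.congr (.of_forall fun x => ?_)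
  dsimp only
  rw [norm_inv, inv_pow, Complex.sq_norm, Complex.normSq_apply]
  simp [sq, add_comm]

lemma poissonInt_mul_inv_add_I_sq {G : ℂ → ℂ} {M : ℝ} (hG : DiffContOnCl ℂ G {z | 0 < z.im})
    (hM : ∀ z : ℂ, 0 < z.im → ‖G z‖ ≤ M) {y : ℝ} (hy : 0 < y) (t : ℝ) :
    poissonInt (fun x : ℝ => ((x + Complex.I : ℂ) ^ 2)⁻¹ * G x) y t
      = Real.pi • (((t + y * Complex.I + Complex.I : ℂ) ^ 2)⁻¹ * G (t + y * Complex.I)) := by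
  have hinv : DiffContOnCl ℂ (fun z : ℂ => ((z + Complex.I) ^ 2)⁻¹) {z | 0 < z.im} :=
    DiffContOnCl.inv (Differentiable.diffContOnCl (by fun_prop)) fun z hz => by
      rw [Complex.closure_setOfPred_lt_im] at hz
      exact pow_ne_zero 2 (add_I_ne_zero hz)
  refine integral_poissonKer_smul_eq (hinv.smul hG) (M := M) (fun z hz => ?_) hy t
  have h1 : 1 ≤ ‖(z + Complex.I) ^ 2‖ := by
    rw [norm_pow]
    exact one_le_pow₀ (one_le_norm_add_I (le_of_lt hz))
  refine (norm_smul _ _).trans_le ?_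
  rw [norm_inv]
  exact (mul_le_of_le_one_left (norm_nonneg _) (inv_le_one_of_one_le₀ h1)).trans (hM z hz)

lemma memLp_poissonKer_smul {p : ENNReal} {r : ℝ → ℂ} (hr : MemLp r p) {y : ℝ} (hy : 0 < y)
    (t : ℝ) : MemLp (fun x => poissonKer y (x - t) • r x) p := by
  refine (hr.const_mul ((1 / y : ℝ) : ℂ)).mono (((continuous_poissonKer hy).comp
    (continuous_sub_right t)).aestronglyMeasurable.smul hr.1) (.of_forall fun x => ?_)
  rw [norm_smul, norm_mul, Complex.norm_real, Real.norm_of_nonneg (poissonKer_nonneg hy _),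
    Real.norm_of_nonneg (by positivity)]
  exact mul_le_mul_of_nonneg_right (poissonKer_le_inv hy _) (norm_nonneg _)

lemma tendsto_comp_add_one_div_mul_I {F : ℂ → ℂ} {z : ℂ} (hF : ContinuousAt F z) :
    Tendsto (fun n : ℕ => F (z + (1 / ((n : ℝ) + 1) : ℝ) * Complex.I)) atTop (𝓝 (F z)) := by
  have h0 := ((Complex.continuous_ofReal.tendsto 0).comp
    (tendsto_one_div_add_atTop_nhds_zero_nat (𝕜 := ℝ))).mul_const Complex.I
  exact hF.tendsto.comp (by simpa using h0.const_add z)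

-- Dividing by `(z + i)²` puts the boundary values in `L²` times `L²`, where a weak limit of the
-- shifted functions `F (z + i/(n+1))` supplies the boundary function.
lemma exists_integrable_poissonInt_eq {F : ℂ → ℂ} {M : ℝ}
    (hF : DifferentiableOn ℂ F {z | 0 < z.im}) (hM : ∀ z : ℂ, 0 < z.im → ‖F z‖ ≤ M) :
    ∃ b : ℝ → ℂ, Integrable b ∧ ∀ y > 0, ∀ t : ℝ, poissonInt b y t
      = Real.pi • (((t + y * Complex.I + Complex.I : ℂ) ^ 2)⁻¹ * F (t + y * Complex.I)) := by
  have hη : ∀ n : ℕ, (0 : ℝ) < 1 / ((n : ℝ) + 1) := fun n => by positivity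
  let G : ℕ → ℂ → ℂ := fun n z => F (z + (1 / ((n : ℝ) + 1) : ℝ) * Complex.I)
  have hGd : ∀ n, DiffContOnCl ℂ (G n) {z | 0 < z.im} := fun n =>
    diffContOnCl_comp_add_mul_I hF (hη n)
  have hGM : ∀ n (z : ℂ), 0 ≤ z.im → ‖G n z‖ ≤ M := fun n z hz => hM _ <| by
    rw [Complex.add_im, Complex.im_ofReal_mul, Complex.I_im, mul_one]
    exact add_pos_of_nonneg_of_pos hz (hη n)
  have hGc : ∀ n, Continuous fun x : ℝ => G n x := fun n =>
    (hGd n).continuousOn.comp_continuous Complex.continuous_ofReal fun x => by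
      simp [Complex.closure_setOfPred_lt_im]
  let r : ℝ → ℂ := fun x => (x + Complex.I : ℂ)⁻¹
  have hr : MemLp r 2 := memLp_two_inv_ofReal_add_I
  obtain ⟨d, hd, hlim⟩ := exists_memLp_two_tendsto_integral_mul (hyperfilter ℕ)
    (d := fun n x => r x * G n x) (g := fun x => (M : ℂ) * r x)
    (fun n => hr.1.mul (hGc n).aestronglyMeasurable) (hr.const_mul _) fun n x => by
      rw [norm_mul, norm_mul, mul_comm, Complex.norm_real]
      exact mul_le_mul_of_nonneg_right ((hGM n x (by simp)).trans (le_abs_self M))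
        (norm_nonneg _)
  have hb : Integrable fun x => r x * d x := hr.integrable_mul hd
  refine ⟨fun x => r x * d x, hb, fun y hy t => ?_⟩
  have hprelimit : ∀ n, ∫ x, poissonKer y (x - t) • r x * (r x * G n x)
      = Real.pi • (((t + y * Complex.I + Complex.I : ℂ) ^ 2)⁻¹ * G n (t + y * Complex.I)) :=
    fun n => by
      rw [← poissonInt_mul_inv_add_I_sq (hGd n) (fun z hz => hGM n z (le_of_lt hz)) hy t,
        poissonInt]
      congr 1 with x
      rw [smul_mul_assoc, ← mul_assoc, ← sq, ← inv_pow]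
  have hG : Tendsto (fun n => G n (t + y * Complex.I)) (hyperfilter ℕ)
      (𝓝 (F (t + y * Complex.I))) :=
    (tendsto_comp_add_one_div_mul_I (hF.differentiableAt (isOpen_upperHalfPlane.mem_nhds
      (by simpa using hy))).continuousAt).mono_left Nat.hyperfilter_le_atTop
  have hlimφ := hlim _ (memLp_poissonKer_smul hr hy t)
  simp_rw [hprelimit] at hlimφ
  rw [← tendsto_nhds_unique hlimφ ((hG.const_mul _).const_smul _), poissonInt]
  simp_rw [smul_mul_assoc]

lemma ae_exists_tendsto_of_norm_le {F : ℂ → ℂ} {M : ℝ}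
    (hF : DifferentiableOn ℂ F {z | 0 < z.im}) (hM : ∀ z : ℂ, 0 < z.im → ‖F z‖ ≤ M) :
    ∀ᵐ t : ℝ, ∃ l, Tendsto (fun y : ℝ => F (t + y * Complex.I)) (𝓝[>] 0) (𝓝 l) := by
  obtain ⟨b, hb, hbF⟩ := exists_integrable_poissonInt_eq hF hM
  filter_upwards [ae_tendsto_poissonInt hb] with t ht
  have hsq : Tendsto (fun y : ℝ => (t + y * Complex.I + Complex.I : ℂ) ^ 2) (𝓝[>] 0)
      (𝓝 ((t + (0 : ℝ) * Complex.I + Complex.I : ℂ) ^ 2)) :=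
    ((by fun_prop : Continuous fun y : ℝ => (t + y * Complex.I + Complex.I : ℂ) ^ 2).tendsto
      0).mono_left nhdsWithin_le_nhds
  refine ⟨_, ((ht.const_smul Real.pi⁻¹).mul hsq).congr' ?_⟩
  filter_upwards [self_mem_nhdsWithin] with y (hy : 0 < y)
  have hne : (t + y * Complex.I + Complex.I : ℂ) ≠ 0 := add_I_ne_zero (by simpa using hy.le)
  rw [hbF y hy, inv_smul_smul₀ Real.pi_ne_zero]
  field_simp

lemma exists_eq_const_of_exp_mul_I_eq_one {q : ℝ → ℝ} {s : Set ℝ} (hs : IsPreconnected s)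
    (hq : ContinuousOn q s) (h1 : ∀ y ∈ s, Complex.exp (q y * Complex.I) = 1) :
    ∃ c, ∀ y ∈ s, q y = c := by
  have hmaps : MapsTo q s (AddSubgroup.zmultiples (2 * Real.pi)) := fun y hy => by
    obtain ⟨n, hn⟩ := Complex.exp_eq_one_iff.1 (h1 y hy)
    exact ⟨n, by simpa using (congrArg Complex.im hn).symm⟩
  obtain ⟨c, -, hc⟩ := hs.eqOn_const_of_mapsTo
    (SetLike.isDiscrete_iff_discreteTopology.2 inferInstance) hq hmaps ⟨0, zero_mem _⟩
  exact ⟨c, hc⟩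

lemma exists_tendsto_of_tendsto_exp_mul_I {q : ℝ → ℝ} (hq : ContinuousOn q (Ioi 0)) {l : ℂ}
    (hl : Tendsto (fun y => Complex.exp (q y * Complex.I)) (𝓝[>] 0) (𝓝 l)) :
    ∃ θ, Tendsto q (𝓝[>] 0) (𝓝 θ) := by
  have hnorm : ‖l‖ = 1 := tendsto_nhds_unique hl.norm <| by
    simp_rw [Complex.norm_exp_ofReal_mul_I]
    exact tendsto_const_nhds
  have hl0 : l ≠ 0 := norm_ne_zero_iff.1 (by simp [hnorm])
  let r : ℝ → ℂ := fun y => Complex.exp (q y * Complex.I) / l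
  have hr : Tendsto r (𝓝[>] 0) (𝓝 1) := by
    simpa only [div_self hl0] using hl.div_const l
  obtain ⟨δ, hδ, hslit⟩ := mem_nhdsGT_iff_exists_Ioo_subset.1
    (hr.eventually (Complex.isOpen_slitPlane.mem_nhds Complex.one_mem_slitPlane))
  have hqδ : ContinuousOn q (Ioo 0 δ) := hq.mono fun _ hy => hy.1
  have hargr : ContinuousOn (fun y => (r y).arg) (Ioo 0 δ) := fun y hy =>
    (Complex.continuousAt_arg (hslit hy)).comp_continuousWithinAt (f := r)
      ((((Complex.continuous_ofReal.comp_continuousOn hqδ).mul_const Complex.I).cexp.div_const l)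
        y hy)
  have hexp_arg : ∀ w : ℂ, ‖w‖ = 1 → Complex.exp (w.arg * Complex.I) = w := fun w hw => by
    simpa [hw] using Complex.norm_mul_exp_arg_mul_I w
  obtain ⟨c, hc⟩ := exists_eq_const_of_exp_mul_I_eq_one (q := fun y => q y - (r y).arg - l.arg)
    isPreconnected_Ioo ((hqδ.sub hargr).sub continuousOn_const) fun y _ => by
      have hry : ‖r y‖ = 1 := by simp [r, hnorm, Complex.norm_exp_ofReal_mul_I]
      push_cast
      rw [sub_mul, sub_mul, Complex.exp_sub, Complex.exp_sub, hexp_arg _ hry, hexp_arg _ hnorm]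
      simp only [r]
      field_simp [Complex.exp_ne_zero]
  have harg0 : Tendsto (fun y => (r y).arg) (𝓝[>] 0) (𝓝 0) := by
    simpa [Function.comp_def] using
      (Complex.continuousAt_arg Complex.one_mem_slitPlane).tendsto.comp hr
  refine ⟨_, ((harg0.add_const l.arg).const_add c).congr' ?_⟩
  filter_upwards [Ioo_mem_nhdsGT hδ] with y hy
  rw [← hc y hy]
  ring

-- `exp (i C)` is bounded for the Cauchy integral `C` of a nonnegative function, since `Im C ≥ 0`.
lemma ae_exists_tendsto_conjPoissonInt_of_nonneg {f : ℝ → ℝ} (hf : Integrable f)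
    (hf0 : ∀ x, 0 ≤ f x) :
    ∀ᵐ t : ℝ, ∃ l, Tendsto (fun y => conjPoissonInt f y t) (𝓝[>] 0) (𝓝 l) := by
  have hd : DifferentiableOn ℂ (fun z => Complex.exp (cauchyInt f z * Complex.I))
      {z | 0 < z.im} := fun z hz =>
    ((differentiableAt_cauchyInt hf hz).mul_const Complex.I).cexp.differentiableWithinAt
  have hM : ∀ z : ℂ, 0 < z.im → ‖Complex.exp (cauchyInt f z * Complex.I)‖ ≤ 1 := fun z hz => by
    rw [Complex.norm_exp, Real.exp_le_one_iff]
    simpa using cauchyInt_im_nonneg hf hf0 hz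
  filter_upwards [ae_exists_tendsto_of_norm_le hd hM, ae_tendsto_poissonInt hf] with t ⟨l, hl⟩ hP
  have hmod : Tendsto (fun y => Complex.exp (poissonInt f y t : ℝ)) (𝓝[>] 0)
      (𝓝 (Complex.exp (Real.pi • f t : ℝ))) :=
    ((Complex.continuous_ofReal.tendsto _).comp hP).cexp
  refine exists_tendsto_of_tendsto_exp_mul_I (continuousOn_conjPoissonInt_right hf t)
    ((hl.mul hmod).congr' ?_)
  filter_upwards [self_mem_nhdsWithin] with y (hy : 0 < y)
  rw [cauchyInt_eq hf hy, ← Complex.exp_add, add_mul, mul_assoc, Complex.I_mul_I]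
  congr 1
  ring

lemma conjPoissonInt_sub {f g : ℝ → ℝ} (hf : Integrable f) (hg : Integrable g) {y : ℝ}
    (hy : 0 < y) (t : ℝ) :
    conjPoissonInt (fun x => f x - g x) y t = conjPoissonInt f y t - conjPoissonInt g y t := by
  simp_rw [conjPoissonInt, smul_sub]
  exact integral_sub (integrable_conjPoissonKer_smul hf hy t)
    (integrable_conjPoissonKer_smul hg hy t)

lemma ae_exists_tendsto_truncHilbert {f : ℝ → ℝ} (hf : Integrable f) :
    ∀ᵐ t : ℝ, ∃ l, Tendsto (fun ε => truncHilbert f ε t) (𝓝[>] 0) (𝓝 l) := by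
  filter_upwards [ae_tendsto_truncHilbert_sub_conjPoissonInt hf,
    ae_exists_tendsto_conjPoissonInt_of_nonneg hf.pos_part fun _ => le_max_right _ _,
    ae_exists_tendsto_conjPoissonInt_of_nonneg hf.neg_part fun _ => le_max_right _ _]
    with t h0 ⟨l₁, h₁⟩ ⟨l₂, h₂⟩
  refine ⟨_, (h0.add (h₁.sub h₂)).congr' ?_⟩
  filter_upwards [self_mem_nhdsWithin] with y hy
  have hdecomp : (fun x => max (f x) 0 - max (-f x) 0) = f :=
    funext fun x => posPart_sub_negPart (f x)
  rw [← conjPoissonInt_sub hf.pos_part hf.neg_part hy, hdecomp, sub_add_cancel]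

section CoshEstimates

lemma norm_cosh_le_exp_norm (z : ℂ) : ‖Complex.cosh z‖ ≤ Real.exp ‖z‖ := by
  have hpos := Complex.norm_exp_le_exp_norm z
  have hneg := Complex.norm_exp_le_exp_norm (-z)
  rw [norm_neg] at hneg
  rw [Complex.cosh, norm_div, Complex.norm_ofNat]
  linarith [norm_add_le (Complex.exp z) (Complex.exp (-z))]

lemma norm_cosh_sub_one_le {z : ℂ} (hz : ‖z‖ ≤ 1) : ‖Complex.cosh z - 1‖ ≤ 2 * ‖z‖ := by
  have hpos := Complex.norm_exp_sub_one_le hz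
  have hneg := Complex.norm_exp_sub_one_le (x := -z) (by rwa [norm_neg])
  rw [norm_neg] at hneg
  have heq : Complex.cosh z - 1 = ((Complex.exp z - 1) + (Complex.exp (-z) - 1)) / 2 := by
    rw [Complex.cosh]
    ring
  rw [heq, norm_div, Complex.norm_ofNat]
  linarith [norm_add_le (Complex.exp z - 1) (Complex.exp (-z) - 1)]

lemma re_cosh (z : ℂ) : (Complex.cosh z).re = Real.cosh z.re * Real.cos z.im := by
  conv_lhs => rw [← Complex.re_add_im z]
  rw [Complex.cosh_add, Complex.cosh_mul_I, Complex.sinh_mul_I, ← Complex.ofReal_cosh,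
    ← Complex.ofReal_cos, ← Complex.ofReal_sinh, ← Complex.ofReal_sin]
  simp [-Complex.ofReal_cosh, -Complex.ofReal_cos, -Complex.ofReal_sinh, -Complex.ofReal_sin]

lemma cosh_sub_one_le_mul_cos {p : ℝ} (hp : |p| ≤ 1) (q : ℝ) :
    Real.cosh q - 1 ≤ 2 * (Real.cosh q * Real.cos p - 1) + |p| := by
  have hsq : p ^ 2 ≤ |p| := by
    rw [← sq_abs]
    exact pow_le_of_le_one (abs_nonneg p) hp two_ne_zero
  have hcos := Real.one_sub_sq_div_two_le_cos (x := p)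
  nlinarith [Real.one_le_cosh q]

lemma exp_sub_one_le_cosh {u δ : ℝ} (hδ : 0 < δ) :
    Real.exp u - 1 ≤ δ + (2 + 1 / (2 * δ)) * (Real.cosh u - 1) := by
  obtain ⟨s, hs⟩ : ∃ s, Real.cosh u - 1 = 2 * δ * s :=
    ⟨(Real.cosh u - 1) / (2 * δ), by field_simp⟩
  have hs0 : 0 ≤ s := by
    have := Real.one_le_cosh u
    exact nonneg_of_mul_nonneg_right (hs ▸ by linarith) (by positivity : 0 < 2 * δ)
  have hsinh : Real.sinh u ≤ δ + s + 2 * δ * s := by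
    refine le_of_sq_le_sq ?_ (by positivity)
    rw [Real.sinh_sq, eq_add_of_sub_eq hs]
    nlinarith [sq_nonneg (δ - s), mul_nonneg (mul_nonneg hδ.le hs0) (add_nonneg hδ.le hs0)]
  calc Real.exp u - 1 = Real.cosh u - 1 + Real.sinh u := by rw [← Real.cosh_add_sinh u]; ring
    _ ≤ 2 * δ * s + (δ + s + 2 * δ * s) := by rw [hs]; gcongr
    _ = δ + (2 + 1 / (2 * δ)) * (Real.cosh u - 1) := by rw [hs]; field_simp; ring

variable {h : ℝ → ℝ} {y : ℝ}

lemma differentiableOn_cosh_cauchyInt (hh : Integrable h) :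
    DifferentiableOn ℂ (fun z => Complex.cosh (cauchyInt h z / Real.pi)) {z | 0 < z.im} :=
  fun _ hz => (((differentiableAt_cauchyInt hh hz).div_const _).ccosh).differentiableWithinAt

lemma norm_cosh_cauchyInt_le (hh : Integrable h) (hy : 0 < y) {z : ℂ} (hz : y ≤ z.im) :
    ‖Complex.cosh (cauchyInt h z / Real.pi)‖ ≤ Real.exp ((∫ x, |h x|) / y / Real.pi) := by
  refine (norm_cosh_le_exp_norm _).trans (Real.exp_le_exp.2 ?_)
  rw [norm_div, Complex.norm_real, Real.norm_of_nonneg Real.pi_pos.le]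
  gcongr
  exact (norm_cauchyInt_le hh (hy.trans_le hz)).trans (by gcongr)

lemma re_cosh_cauchyInt (hh : Integrable h) (hy : 0 < y) (t : ℝ) :
    (Complex.cosh (cauchyInt h (t + y * Complex.I) / Real.pi)).re
      = Real.cosh (conjPoissonInt h y t / Real.pi) * Real.cos (poissonInt h y t / Real.pi) := by
  rw [re_cosh, Complex.div_ofReal_re, Complex.div_ofReal_im, cauchyInt_re hh hy, cauchyInt_im hh hy]

lemma integrable_inv_one_add_sq_smul_cosh_cauchyInt (hh : Integrable h) (hy : 0 < y) :
    Integrable fun t : ℝ => (1 + t ^ 2)⁻¹ •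
      Complex.cosh (cauchyInt h (t + y * Complex.I) / Real.pi) := by
  refine integrable_inv_one_add_sq.smul_bdd (Real.exp ((∫ x, |h x|) / y / Real.pi)) ?_
    (.of_forall fun t => norm_cosh_cauchyInt_le hh hy (by simp))
  exact (Complex.continuous_cosh.comp
    ((continuous_cauchyInt_add_mul_I hh hy).div_const _)).aestronglyMeasurable

lemma integrable_inv_mul_re_cosh_cauchyInt (hh : Integrable h) (hy : 0 < y) :
    Integrable fun t : ℝ => (1 + t ^ 2)⁻¹ *
      (Complex.cosh (cauchyInt h (t + y * Complex.I) / Real.pi)).re :=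
  (integrable_inv_one_add_sq_smul_cosh_cauchyInt hh hy).re.congr
    (.of_forall fun _ => Complex.smul_re _ _)

lemma integral_re_cosh_cauchyInt (hh : Integrable h) (hy : 0 < y) :
    ∫ t : ℝ, (1 + t ^ 2)⁻¹ *
        (Complex.cosh (cauchyInt h (t + y * Complex.I) / Real.pi)).re
      = Real.pi * (Complex.cosh (cauchyInt h (Complex.I + y * Complex.I) / Real.pi)).re := by
  have hmean := integral_inv_one_add_sq_smul_eq
    (diffContOnCl_comp_add_mul_I (differentiableOn_cosh_cauchyInt hh) hy)
    (fun z hz => norm_cosh_cauchyInt_le hh hy (z := z + y * Complex.I) (by simpa using hz.le))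
  have hre := congrArg Complex.re hmean
  rw [Complex.smul_re, smul_eq_mul] at hre
  rw [← hre, ← RCLike.re_eq_complex_re,
    ← integral_re (integrable_inv_one_add_sq_smul_cosh_cauchyInt hh hy)]
  simp only [RCLike.re_eq_complex_re, Complex.smul_re, smul_eq_mul]

lemma inv_mul_cosh_conjPoissonInt_sub_one_le (hh : Integrable h) (h1 : ∀ x, |h x| ≤ 1)
    (hy : 0 < y) (t : ℝ) :
    (1 + t ^ 2)⁻¹ * (Real.cosh (conjPoissonInt h y t / Real.pi) - 1)
      ≤ 2 * ((1 + t ^ 2)⁻¹ * (Complex.cosh (cauchyInt h (t + y * Complex.I) / Real.pi)).re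
          - (1 + t ^ 2)⁻¹) + |poissonInt h y t| / Real.pi := by
  have hp : |poissonInt h y t / Real.pi| ≤ 1 := by
    rw [abs_div, abs_of_pos Real.pi_pos, div_le_one Real.pi_pos]
    exact abs_poissonInt_le h1 hy t
  have hw : (1 + t ^ 2)⁻¹ ≤ 1 := inv_le_one_of_one_le₀ (by nlinarith [sq_nonneg t])
  calc _ ≤ (1 + t ^ 2)⁻¹ * (2 * (Real.cosh (conjPoissonInt h y t / Real.pi)
          * Real.cos (poissonInt h y t / Real.pi) - 1) + |poissonInt h y t / Real.pi|) := by
        gcongr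
        exact cosh_sub_one_le_mul_cos hp _
    _ = 2 * ((1 + t ^ 2)⁻¹ * (Real.cosh (conjPoissonInt h y t / Real.pi)
          * Real.cos (poissonInt h y t / Real.pi)) - (1 + t ^ 2)⁻¹)
          + (1 + t ^ 2)⁻¹ * |poissonInt h y t / Real.pi| := by ring
    _ ≤ 2 * ((1 + t ^ 2)⁻¹ * (Real.cosh (conjPoissonInt h y t / Real.pi)
          * Real.cos (poissonInt h y t / Real.pi)) - (1 + t ^ 2)⁻¹)
          + 1 * |poissonInt h y t / Real.pi| := by gcongr
    _ = _ := by rw [re_cosh_cauchyInt hh hy, one_mul, abs_div, abs_of_pos Real.pi_pos]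

lemma integrable_inv_mul_cosh_conjPoissonInt_sub_one (hh : Integrable h) (h1 : ∀ x, |h x| ≤ 1)
    (hy : 0 < y) :
    Integrable fun t => (1 + t ^ 2)⁻¹ * (Real.cosh (conjPoissonInt h y t / Real.pi) - 1) := by
  have hcont := continuous_conjPoissonInt hh hy
  have hre := integrable_inv_mul_re_cosh_cauchyInt hh hy
  refine (((hre.sub integrable_inv_one_add_sq).const_mul 2).add
    ((integrable_poissonInt hh hy).abs.div_const Real.pi)).mono'
    (AEStronglyMeasurable.mul (by fun_prop)
      ((Real.continuous_cosh.comp (hcont.div_const _)).sub continuous_const).aestronglyMeasurable)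
    (.of_forall fun t => ?_)
  rw [Real.norm_of_nonneg (mul_nonneg (by positivity) (sub_nonneg.2 (Real.one_le_cosh _)))]
  exact inv_mul_cosh_conjPoissonInt_sub_one_le hh h1 hy t

lemma re_cosh_cauchyInt_I_sub_one_le (hh : Integrable h) (hpi : ∫ x, |h x| ≤ Real.pi)
    (hy : 0 < y) :
    (Complex.cosh (cauchyInt h (Complex.I + y * Complex.I) / Real.pi)).re - 1
      ≤ 2 * ((∫ x, |h x|) / Real.pi) := by
  set ζ := cauchyInt h (Complex.I + y * Complex.I) / Real.pi with hζ
  have hζ_le : ‖ζ‖ ≤ (∫ x, |h x|) / Real.pi := by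
    rw [hζ, norm_div, Complex.norm_real, Real.norm_of_nonneg Real.pi_pos.le]
    have him : 1 ≤ (Complex.I + y * Complex.I).im := by simpa using hy.le
    gcongr
    exact (norm_cauchyInt_le hh (one_pos.trans_le him)).trans
      (div_le_self (integral_nonneg fun _ => abs_nonneg _) him)
  calc (Complex.cosh ζ).re - 1 = (Complex.cosh ζ - 1).re := by simp
    _ ≤ ‖Complex.cosh ζ - 1‖ := Complex.re_le_norm _
    _ ≤ 2 * ‖ζ‖ := norm_cosh_sub_one_le (hζ_le.trans ((div_le_one Real.pi_pos).2 hpi))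
    _ ≤ 2 * ((∫ x, |h x|) / Real.pi) := by gcongr

-- The mean value property at `I` of the bounded holomorphic function `cosh (cauchyInt h / π)`:
-- on the boundary its real part controls `cosh` of the conjugate function.
lemma integral_inv_mul_cosh_conjPoissonInt_sub_one_le (hh : Integrable h) (h1 : ∀ x, |h x| ≤ 1)
    (hpi : ∫ x, |h x| ≤ Real.pi) (hy : 0 < y) :
    ∫ t, (1 + t ^ 2)⁻¹ * (Real.cosh (conjPoissonInt h y t / Real.pi) - 1)
      ≤ 5 * ∫ x, |h x| := by
  set r := (Complex.cosh (cauchyInt h (Complex.I + y * Complex.I) / Real.pi)).re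
  have hre := integrable_inv_mul_re_cosh_cauchyInt hh hy
  have hre_sub : Integrable fun t : ℝ => 2 * ((1 + t ^ 2)⁻¹ *
      (Complex.cosh (cauchyInt h (t + y * Complex.I) / Real.pi)).re - (1 + t ^ 2)⁻¹) :=
    (hre.sub integrable_inv_one_add_sq).const_mul 2
  have hpoisson := (integrable_poissonInt hh hy).abs.div_const Real.pi
  calc _ ≤ ∫ t : ℝ, (2 * ((1 + t ^ 2)⁻¹ * (Complex.cosh (cauchyInt h (t + y * Complex.I)
          / Real.pi)).re - (1 + t ^ 2)⁻¹) + |poissonInt h y t| / Real.pi) :=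
        integral_mono (integrable_inv_mul_cosh_conjPoissonInt_sub_one hh h1 hy)
          (hre_sub.add hpoisson) (inv_mul_cosh_conjPoissonInt_sub_one_le hh h1 hy)
    _ = 2 * (Real.pi * r - Real.pi) + (∫ t, |poissonInt h y t|) / Real.pi := by
        rw [integral_add hre_sub hpoisson, integral_const_mul,
          integral_sub hre integrable_inv_one_add_sq, integral_re_cosh_cauchyInt hh hy,
          integral_univ_inv_one_add_sq, integral_div]
    _ = 2 * Real.pi * (r - 1) + (∫ t, |poissonInt h y t|) / Real.pi := by ring
    _ ≤ 2 * Real.pi * (2 * ((∫ x, |h x|) / Real.pi)) + Real.pi * (∫ x, |h x|) / Real.pi := by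
        gcongr
        exacts [re_cosh_cauchyInt_I_sub_one_le hh hpi hy, integral_abs_poissonInt_le hh hy]
    _ = 5 * ∫ x, |h x| := by field_simp; ring

lemma inv_mul_exp_abs_conjPoissonInt_sub_one_le {δ : ℝ} (hδ : 0 < δ) (h : ℝ → ℝ) (y t : ℝ) :
    (1 + t ^ 2)⁻¹ * (Real.exp |conjPoissonInt h y t / Real.pi| - 1)
      ≤ δ * (1 + t ^ 2)⁻¹ + (2 + 1 / (2 * δ)) *
        ((1 + t ^ 2)⁻¹ * (Real.cosh (conjPoissonInt h y t / Real.pi) - 1)) := by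
  have hexp := exp_sub_one_le_cosh (u := |conjPoissonInt h y t / Real.pi|) hδ
  rw [Real.cosh_abs] at hexp
  exact (mul_le_mul_of_nonneg_left hexp (by positivity)).trans_eq (by ring)

lemma integrable_inv_mul_exp_abs_conjPoissonInt_sub_one (hh : Integrable h)
    (h1 : ∀ x, |h x| ≤ 1) (hy : 0 < y) :
    Integrable fun t => (1 + t ^ 2)⁻¹ * (Real.exp |conjPoissonInt h y t / Real.pi| - 1) := by
  have hcont := continuous_conjPoissonInt hh hy
  refine ((integrable_inv_one_add_sq.const_mul 1).add
    ((integrable_inv_mul_cosh_conjPoissonInt_sub_one hh h1 hy).const_mul (2 + 1 / (2 * 1)))).mono'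
    (AEStronglyMeasurable.mul (by fun_prop) ((Real.continuous_exp.comp
      (hcont.div_const _).abs).sub continuous_const).aestronglyMeasurable) (.of_forall fun t => ?_)
  rw [Real.norm_of_nonneg (mul_nonneg (by positivity)
    (sub_nonneg.2 (Real.one_le_exp (abs_nonneg _))))]
  exact inv_mul_exp_abs_conjPoissonInt_sub_one_le one_pos h y t

lemma exists_integral_inv_mul_exp_abs_conjPoissonInt_sub_one_le {η : ℝ} (hη : 0 < η) :
    ∃ κ > 0, ∀ h : ℝ → ℝ, Integrable h → (∀ x, |h x| ≤ 1) → ∫ x, |h x| ≤ κ → ∀ y > 0,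
      ∫ t, (1 + t ^ 2)⁻¹ * (Real.exp |conjPoissonInt h y t / Real.pi| - 1) ≤ η := by
  have hδ : 0 < η / (2 * Real.pi) := by positivity
  set A := 2 + 1 / (2 * (η / (2 * Real.pi)))
  have hA : 0 < A := by positivity
  refine ⟨min Real.pi (η / (10 * A)), by positivity, fun h hh h1 hκ y hy => ?_⟩
  have hcosh := integrable_inv_mul_cosh_conjPoissonInt_sub_one hh h1 hy
  calc _ ≤ ∫ t, (η / (2 * Real.pi) * (1 + t ^ 2)⁻¹
          + A * ((1 + t ^ 2)⁻¹ * (Real.cosh (conjPoissonInt h y t / Real.pi) - 1))) :=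
        integral_mono (integrable_inv_mul_exp_abs_conjPoissonInt_sub_one hh h1 hy)
          ((integrable_inv_one_add_sq.const_mul _).add (hcosh.const_mul _))
          (inv_mul_exp_abs_conjPoissonInt_sub_one_le hδ h y)
    _ = η / (2 * Real.pi) * Real.pi
          + A * ∫ t, (1 + t ^ 2)⁻¹ * (Real.cosh (conjPoissonInt h y t / Real.pi) - 1) := by
        rw [integral_add (integrable_inv_one_add_sq.const_mul _) (hcosh.const_mul _),
          integral_const_mul, integral_const_mul, integral_univ_inv_one_add_sq]
    _ ≤ η / (2 * Real.pi) * Real.pi + A * (5 * (η / (10 * A))) := by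
        gcongr
        refine (integral_inv_mul_cosh_conjPoissonInt_sub_one_le hh h1
          (hκ.trans (min_le_left _ _)) hy).trans ?_
        gcongr
        exact hκ.trans (min_le_right _ _)
    _ = η := by field_simp; ring

end CoshEstimates

section LLogL

/-- `f` belongs to the Zygmund class `L log L` of the interval `(-1, 1)`, encoded as a function on
the line that vanishes outside the interval. -/
structure IsLLogL (f : ℝ → ℝ) : Prop where
  integrable : Integrable f
  integrable_mul_posLog : Integrable fun x => |f x| * Real.posLog (f x)
  eq_zero : ∀ x ∉ Ioo (-1 : ℝ) 1, f x = 0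

variable {f : ℝ → ℝ} {y : ℝ}

lemma IsLLogL.of_abs_le {g : ℝ → ℝ} (hf : IsLLogL f) (hg : AEStronglyMeasurable g)
    (h : ∀ x, |g x| ≤ |f x|) : IsLLogL g where
  integrable := hf.integrable.mono hg (.of_forall h)
  integrable_mul_posLog := by
    refine hf.integrable_mul_posLog.mono (hg.aemeasurable.abs.mul
      (Real.continuous_posLog.measurable.comp_aemeasurable hg.aemeasurable)).aestronglyMeasurable
      (.of_forall fun x => ?_)
    have hlog : Real.posLog (g x) ≤ Real.posLog (f x) := by
      rw [← Real.posLog_abs (g x), ← Real.posLog_abs (f x)]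
      exact Real.posLog_le_posLog (abs_nonneg _) (h x)
    simp only [norm_mul, Real.norm_eq_abs, abs_abs, abs_of_nonneg Real.posLog_nonneg]
    exact mul_le_mul (h x) hlog Real.posLog_nonneg (abs_nonneg _)
  eq_zero x hx := abs_nonpos_iff.1 ((h x).trans_eq (by rw [hf.eq_zero x hx, abs_zero]))

lemma IsLLogL.id_smul (hf : IsLLogL f) : IsLLogL fun x => x • f x := by
  refine hf.of_abs_le (aestronglyMeasurable_id.smul hf.integrable.1) fun x => ?_
  by_cases hx : x ∈ Ioo (-1 : ℝ) 1
  · rw [smul_eq_mul, abs_mul]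
    exact mul_le_of_le_one_left (abs_nonneg _) (abs_lt.2 hx).le
  · simp [hf.eq_zero x hx]

lemma mul_le_mul_posLog_add_exp_sub_one {a u : ℝ} (ha : 0 ≤ a) (hu : 0 ≤ u) :
    a * u ≤ a * Real.posLog a + (Real.exp u - 1) := by
  have hlog := mul_nonneg ha (Real.posLog_nonneg (x := a))
  rcases le_or_gt a 1 with ha1 | ha1
  · nlinarith [Real.add_one_le_exp u]
  · have ha0 : 0 < a := one_pos.trans ha1
    have hexp := Real.add_one_le_exp (u - Real.log a)
    rw [Real.exp_sub, Real.exp_log ha0, le_div_iff₀ ha0] at hexp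
    rw [Real.posLog_eq_log (ha1.le.trans (le_abs_self a))]
    linarith

lemma abs_mul_le_add_indicator_posLog (f : ℝ → ℝ) {M u : ℝ} (hM : 0 ≤ M) (hu : 0 ≤ u) (x : ℝ) :
    |f x| * u ≤ (M + 1) * (Real.exp u - 1)
      + {x | M < |f x|}.indicator (fun x => |f x| * Real.posLog (f x)) x := by
  have hexp : u ≤ Real.exp u - 1 := by linarith [Real.add_one_le_exp u]
  by_cases hx : M < |f x|
  · rw [indicator_of_mem (s := {x | M < |f x|}) hx, ← Real.posLog_abs]
    nlinarith [mul_le_mul_posLog_add_exp_sub_one (abs_nonneg (f x)) hu]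
  · rw [indicator_of_notMem (s := {x | M < |f x|}) hx, add_zero]
    exact mul_le_mul ((not_lt.1 hx).trans (by linarith)) hexp hu (by linarith)

lemma tendsto_integral_indicator_lt_abs (hf : AEMeasurable f) {g : ℝ → ℝ} (hg : Integrable g) :
    Tendsto (fun M : ℝ => ∫ x, {x | M < |f x|}.indicator g x) atTop (𝓝 0) := by
  rw [← integral_zero ℝ ℝ (μ := volume)]
  refine tendsto_integral_filter_of_dominated_convergence (fun x => ‖g x‖)
    (.of_forall fun M => ?_)
    (.of_forall fun M => .of_forall fun x => norm_indicator_le_norm_self g x) hg.norm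
    (.of_forall fun x => tendsto_const_nhds.congr' ?_)
  · exact hg.1.indicator₀ (nullMeasurableSet_lt aemeasurable_const hf.abs)
  · filter_upwards [eventually_ge_atTop |f x|] with M hM
    exact (indicator_of_notMem (s := {x | M < |f x|}) hM.not_gt g).symm

lemma exists_abs_le_one_setIntegral_abs_eq {g : ℝ → ℝ} (hg : Measurable g) {s : Set ℝ}
    (hs : MeasurableSet s) (hs' : volume s ≠ ⊤) :
    ∃ h : ℝ → ℝ, Integrable h ∧ (∀ x, |h x| ≤ 1) ∧ ∫ x, |h x| = volume.real s ∧
      ∫ x in s, |g x| = ∫ x, h x * g x := by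
  have habs : ∀ x, |s.indicator (fun x => if 0 ≤ g x then (1 : ℝ) else -1) x|
      = s.indicator 1 x := fun x => by
    by_cases hx : x ∈ s <;> by_cases h0 : 0 ≤ g x <;> simp [hx, h0]
  refine ⟨s.indicator fun x => if 0 ≤ g x then 1 else -1, ?_, fun x => ?_, ?_, ?_⟩
  · refine ((integrable_indicator_iff hs).2 (integrableOn_const (C := (1 : ℝ)) hs')).mono'
      ((Measurable.ite (measurableSet_le measurable_const hg) measurable_const
        measurable_const).indicator hs).aestronglyMeasurable (.of_forall fun x => (habs x).le)
  · rw [habs]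
    exact indicator_le_self' (fun _ _ => zero_le_one) x
  · simp_rw [habs, integral_indicator_one hs]
  · rw [← integral_indicator hs]
    congr 1 with x
    by_cases hx : x ∈ s
    · rcases le_or_gt 0 (g x) with h0 | h0
      · simp [hx, h0, abs_of_nonneg]
      · simp [hx, h0.not_ge, abs_of_neg h0]
    · simp [hx]

lemma IsLLogL.abs_mul_conjPoissonInt_le (hf : IsLLogL f) {M : ℝ} (hM : 0 ≤ M) (h : ℝ → ℝ)
    (y x : ℝ) :
    |f x * conjPoissonInt h y x| ≤ Real.pi * (2 * (M + 1) *
        ((1 + x ^ 2)⁻¹ * (Real.exp |conjPoissonInt h y x / Real.pi| - 1))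
      + {x | M < |f x|}.indicator (fun x => |f x| * Real.posLog (f x)) x) := by
  set u := |conjPoissonInt h y x / Real.pi| with hu
  have hexp : 0 ≤ Real.exp u - 1 := sub_nonneg.2 (Real.one_le_exp (abs_nonneg _))
  have htail : 0 ≤ {x | M < |f x|}.indicator (fun x => |f x| * Real.posLog (f x)) x :=
    indicator_nonneg (fun x _ => mul_nonneg (abs_nonneg _) Real.posLog_nonneg) x
  by_cases hx : x ∈ Ioo (-1 : ℝ) 1
  · have hw : 1 ≤ 2 * (1 + x ^ 2)⁻¹ := by
      rw [← div_eq_mul_inv, one_le_div (by positivity)]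
      nlinarith [hx.1, hx.2]
    calc |f x * conjPoissonInt h y x| = Real.pi * (|f x| * u) := by
          rw [hu, abs_mul, abs_div, abs_of_pos Real.pi_pos]
          field_simp
      _ ≤ Real.pi * ((M + 1) * (1 * (Real.exp u - 1))
            + {x | M < |f x|}.indicator (fun x => |f x| * Real.posLog (f x)) x) := by
          rw [one_mul]
          gcongr
          exact abs_mul_le_add_indicator_posLog f hM (abs_nonneg _) x
      _ ≤ Real.pi * ((M + 1) * (2 * (1 + x ^ 2)⁻¹ * (Real.exp u - 1))
            + {x | M < |f x|}.indicator (fun x => |f x| * Real.posLog (f x)) x) := by gcongr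
      _ = _ := by ring
  · rw [hf.eq_zero x hx, zero_mul, abs_zero]
    positivity

-- Zygmund duality: `L log L` against the exponential integrability of the conjugate function.
lemma IsLLogL.exists_setIntegral_abs_conjPoissonInt_le (hf : IsLLogL f) {η : ℝ} (hη : 0 < η) :
    ∃ κ > 0, ∀ s : Set ℝ, MeasurableSet s → volume s ≤ ENNReal.ofReal κ → ∀ y > 0,
      ∫ t in s, |conjPoissonInt f y t| ≤ η := by
  obtain ⟨M, hM0, hM⟩ := ((eventually_ge_atTop (0 : ℝ)).and
    ((tendsto_integral_indicator_lt_abs hf.integrable.aemeasurable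
      hf.integrable_mul_posLog).eventually_le_const
      (by positivity : 0 < η / (2 * Real.pi)))).exists
  obtain ⟨κ, hκ, hκ_le⟩ := exists_integral_inv_mul_exp_abs_conjPoissonInt_sub_one_le
    (by positivity : 0 < η / (4 * Real.pi * (M + 1)))
  refine ⟨κ, hκ, fun s hs hsκ y hy => ?_⟩
  obtain ⟨h, hh, h1, hh_int, hs_eq⟩ := exists_abs_le_one_setIntegral_abs_eq
    (continuous_conjPoissonInt hf.integrable hy).measurable hs
    (hsκ.trans_lt ENNReal.ofReal_lt_top).ne
  have hexp := (integrable_inv_mul_exp_abs_conjPoissonInt_sub_one hh h1 hy).const_mul (2 * (M + 1))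
  have htail : Integrable ({x | M < |f x|}.indicator fun x => |f x| * Real.posLog (f x)) :=
    hf.integrable_mul_posLog.indicator₀
      (nullMeasurableSet_lt aemeasurable_const hf.integrable.abs.aemeasurable)
  rw [hs_eq, integral_mul_conjPoissonInt hf.integrable hh hy, ← integral_neg]
  calc ∫ x, -(f x * conjPoissonInt h y x)
      ≤ ∫ x, Real.pi * (2 * (M + 1) *
          ((1 + x ^ 2)⁻¹ * (Real.exp |conjPoissonInt h y x / Real.pi| - 1))
        + {x | M < |f x|}.indicator (fun x => |f x| * Real.posLog (f x)) x) := by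
        have hbound := hf.abs_mul_conjPoissonInt_le hM0 h y
        have hinteg := (hexp.add htail).const_mul Real.pi
        refine integral_mono (hinteg.mono' (hf.integrable.1.mul
          (continuous_conjPoissonInt hh hy).aestronglyMeasurable) (.of_forall hbound)).neg hinteg
          fun x => (neg_le_abs _).trans (hbound x)
    _ = Real.pi * (2 * (M + 1) *
          (∫ x, (1 + x ^ 2)⁻¹ * (Real.exp |conjPoissonInt h y x / Real.pi| - 1))
        + ∫ x, {x | M < |f x|}.indicator (fun x => |f x| * Real.posLog (f x)) x) := by
        rw [integral_const_mul, integral_add hexp htail, integral_const_mul]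
    _ ≤ Real.pi * (2 * (M + 1) * (η / (4 * Real.pi * (M + 1))) + η / (2 * Real.pi)) := by
        gcongr
        refine hκ_le h hh h1 ?_ y hy
        rw [hh_int]
        exact ENNReal.toReal_le_of_le_ofReal hκ.le hsκ
    _ = η := by field_simp; norm_num

lemma IsLLogL.unifIntegrable_conjPoissonInt (hf : IsLLogL f) {ι : Type*} {y : ι → ℝ}
    (hy : ∀ i, 0 < y i) : UnifIntegrable (fun i => conjPoissonInt f (y i)) 1 volume := by
  intro η hη
  obtain ⟨κ, hκ, hκ_le⟩ := hf.exists_setIntegral_abs_conjPoissonInt_le hη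
  refine ⟨κ, hκ, fun i s hs hsκ => ?_⟩
  have hs' : volume s < ⊤ := hsκ.trans_lt ENNReal.ofReal_lt_top
  have hinteg : IntegrableOn (conjPoissonInt f (y i)) s :=
    Measure.integrableOn_of_bounded (M := (∫ x, |f x|) / y i) hs'.ne
      (continuous_conjPoissonInt hf.integrable (hy i)).aestronglyMeasurable
      (.of_forall (abs_conjPoissonInt_le hf.integrable (hy i)))
  rw [eLpNorm_indicator_eq_eLpNorm_restrict hs, eLpNorm_one_eq_lintegral_enorm,
    ← ofReal_integral_norm_eq_lintegral_enorm hinteg]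
  exact ENNReal.ofReal_le_ofReal (hκ_le s hs hsκ (y i) (hy i))

lemma IsLLogL.tendsto_integral_abs_conjPoissonInt (hf : IsLLogL f) {y : ℕ → ℝ}
    (hy : ∀ n, 0 < y n) {s : Set ℝ} (hs : MeasurableSet s) (hs' : volume s ≠ ⊤)
    (hlim : ∀ᵐ t, t ∈ s → Tendsto (fun n => conjPoissonInt f (y n) t) atTop (𝓝 0)) :
    Tendsto (fun n => ∫ t in s, |conjPoissonInt f (y n) t|) atTop (𝓝 0) := by
  have : IsFiniteMeasure (volume.restrict s) := ⟨by simpa using hs'.lt_top⟩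
  have hcont n := continuous_conjPoissonInt hf.integrable (hy n)
  have hL1 := tendsto_Lp_finite_of_tendsto_ae (g := 0) le_rfl ENNReal.one_ne_top
    (fun n => (hcont n).aestronglyMeasurable) MemLp.zero
    ((hf.unifIntegrable_conjPoissonInt hy).restrict s) ((ae_restrict_iff' hs).2 hlim)
  refine ((ENNReal.tendsto_toReal ENNReal.zero_ne_top).comp hL1).congr fun n => ?_
  rw [Function.comp_apply, sub_zero, toReal_eLpNorm (hcont n).aestronglyMeasurable,
    lpNorm_one_eq_integral_norm (hcont n).aestronglyMeasurable]
  rfl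

end LLogL

section ArcsineWeight

/-- The function `√(1 - x²)` on `[-1, 1]`, extended by zero: `√` vanishes at negative numbers. -/
def semicircle (x : ℝ) : ℝ := √(1 - x ^ 2)

/-- The function `1 / √(1 - x²)` on `(-1, 1)`, extended by zero: `√` vanishes at negative
numbers and `0⁻¹ = 0`. It spans the kernel of the finite Hilbert transform. -/
def arcsineWeight (x : ℝ) : ℝ := (semicircle x)⁻¹

lemma continuous_semicircle : Continuous semicircle := by
  unfold semicircle
  fun_prop

lemma semicircle_nonneg (x : ℝ) : 0 ≤ semicircle x := Real.sqrt_nonneg _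

lemma semicircle_le_one (x : ℝ) : semicircle x ≤ 1 :=
  Real.sqrt_le_one.2 (by linarith [sq_nonneg x])

lemma semicircle_eq_zero {x : ℝ} (hx : x ∉ Ioo (-1 : ℝ) 1) : semicircle x = 0 := by
  have : 1 ≤ x ^ 2 := by
    rw [one_le_sq_iff_one_le_abs]
    exact not_lt.1 fun h => hx (abs_lt.1 h)
  exact Real.sqrt_eq_zero_of_nonpos (by linarith)

lemma one_sub_sq_pos {x : ℝ} (hx : x ∈ Ioo (-1 : ℝ) 1) : 0 < 1 - x ^ 2 := by
  nlinarith [hx.1, hx.2]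

lemma semicircle_pos {x : ℝ} (hx : x ∈ Ioo (-1 : ℝ) 1) : 0 < semicircle x :=
  Real.sqrt_pos.2 (one_sub_sq_pos hx)

lemma semicircle_sq {x : ℝ} (hx : x ∈ Ioo (-1 : ℝ) 1) : semicircle x ^ 2 = 1 - x ^ 2 :=
  Real.sq_sqrt (one_sub_sq_pos hx).le

lemma arcsineWeight_eq_zero {x : ℝ} (hx : x ∉ Ioo (-1 : ℝ) 1) : arcsineWeight x = 0 := by
  rw [arcsineWeight, semicircle_eq_zero hx, inv_zero]

lemma measurable_arcsineWeight : Measurable arcsineWeight := continuous_semicircle.measurable.inv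

lemma arcsineWeight_eq_rpow {x : ℝ} (hx : x ∈ Ioo (-1 : ℝ) 1) :
    arcsineWeight x = (1 - x ^ 2) ^ (-(1 / 2) : ℝ) := by
  rw [arcsineWeight, semicircle, Real.sqrt_eq_rpow, Real.rpow_neg (one_sub_sq_pos hx).le]

lemma semicircle_eq_arcsineWeight_sub (x : ℝ) :
    semicircle x = arcsineWeight x - x * (x * arcsineWeight x) := by
  by_cases hx : x ∈ Ioo (-1 : ℝ) 1
  · have h := semicircle_sq hx
    have := semicircle_pos hx
    rw [arcsineWeight]
    field_simp
    linarith
  · simp [semicircle_eq_zero hx, arcsineWeight_eq_zero hx]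

lemma one_sub_sq_rpow_le {x r : ℝ} (hx : x ∈ Ioo (-1 : ℝ) 1) (hr : r ≤ 0) :
    (1 - x ^ 2) ^ r ≤ (1 + x) ^ r + (1 - x) ^ r := by
  have hl : 0 < 1 + x := by linarith [hx.1]
  have hr' : 0 < 1 - x := by linarith [hx.2]
  rcases le_total 0 x with h | h
  · exact (Real.rpow_le_rpow_of_nonpos hr' (by nlinarith) hr).trans
      (le_add_of_nonneg_left (Real.rpow_nonneg hl.le r))
  · exact (Real.rpow_le_rpow_of_nonpos hl (by nlinarith) hr).trans
      (le_add_of_nonneg_right (Real.rpow_nonneg hr'.le r))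

lemma integrableOn_one_sub_sq_rpow {r : ℝ} (hr : -1 < r) (hr0 : r ≤ 0) :
    IntegrableOn (fun x : ℝ => (1 - x ^ 2) ^ r) (Ioo (-1) 1) := by
  have h := intervalIntegral.intervalIntegrable_rpow' (a := 0) (b := 2) hr
  have hl : IntervalIntegrable (fun x : ℝ => (1 + x) ^ r) volume (-1) 1 := by
    simpa [show (2 : ℝ) - 1 = 1 by norm_num] using h.comp_add_left 1
  have hr' : IntervalIntegrable (fun x : ℝ => (1 - x) ^ r) volume (-1) 1 := by
    simpa [show (1 : ℝ) - 2 = -1 by norm_num] using (h.comp_sub_left 1).symm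
  refine ((intervalIntegrable_iff_integrableOn_Ioo_of_le (by norm_num)).1 (hl.add hr')).mono'
    (Measurable.pow_const (by fun_prop) r).aestronglyMeasurable
    (ae_restrict_of_forall_mem measurableSet_Ioo fun x hx => ?_)
  rw [Real.norm_of_nonneg (Real.rpow_nonneg (one_sub_sq_pos hx).le r)]
  exact one_sub_sq_rpow_le hx hr0

lemma mul_posLog_le {a : ℝ} (ha : 0 ≤ a) : a * Real.posLog a ≤ 2 * (a * √a) := by
  have hlog : Real.posLog a ≤ 2 * √a := by
    rcases ha.eq_or_lt with rfl | ha
    · simp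
    · have := Real.log_le_sub_one_of_pos (Real.sqrt_pos.2 ha)
      rw [Real.log_sqrt ha.le] at this
      exact max_le (by positivity) (by linarith)
  nlinarith

lemma arcsineWeight_mul_sqrt {x : ℝ} (hx : x ∈ Ioo (-1 : ℝ) 1) :
    arcsineWeight x * √(arcsineWeight x) = (1 - x ^ 2) ^ (-(3 / 4) : ℝ) := by
  have h := one_sub_sq_pos hx
  rw [arcsineWeight_eq_rpow hx, Real.sqrt_eq_rpow, ← Real.rpow_mul h.le, ← Real.rpow_add h]
  norm_num

lemma isLLogL_arcsineWeight : IsLLogL arcsineWeight where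
  integrable := by
    refine ((integrableOn_iff_integrable_of_support_subset (s := Ioo (-1) 1) fun x hx => ?_).1 <|
      (integrableOn_one_sub_sq_rpow (r := -(1 / 2)) (by norm_num) (by norm_num)).congr_fun
        (fun x hx => (arcsineWeight_eq_rpow hx).symm) measurableSet_Ioo)
    exact not_imp_comm.1 arcsineWeight_eq_zero hx
  integrable_mul_posLog := by
    have h34 := integrableOn_one_sub_sq_rpow (r := -(3 / 4)) (by norm_num) (by norm_num)
    have hmeas := measurable_arcsineWeight
    refine ((integrable_indicator_iff measurableSet_Ioo).2 (h34.const_mul 2)).mono'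
      (hmeas.abs.mul (Real.continuous_posLog.measurable.comp hmeas)).aestronglyMeasurable
      (.of_forall fun x => ?_)
    have hw : 0 ≤ arcsineWeight x := inv_nonneg.2 (semicircle_nonneg x)
    by_cases hx : x ∈ Ioo (-1 : ℝ) 1
    · rw [indicator_of_mem hx, abs_of_nonneg hw,
        Real.norm_of_nonneg (mul_nonneg hw Real.posLog_nonneg), ← arcsineWeight_mul_sqrt hx]
      exact mul_posLog_le hw
    · simp [arcsineWeight_eq_zero hx, hx]
  eq_zero _ := arcsineWeight_eq_zero

lemma integral_mul_arcsineWeight (g : ℝ → ℝ) :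
    ∫ x, g x * arcsineWeight x = ∫ θ in 0..Real.pi, g (Real.cos θ) := by
  rw [← Polynomial.Chebyshev.integral_measureT_eq_integral_cos,
    Polynomial.Chebyshev.integral_measureT, intervalIntegral.integral_of_le (by norm_num),
    integral_Ioc_eq_integral_Ioo, ← setIntegral_eq_integral_of_forall_compl_eq_zero
      (s := Ioo (-1) 1) fun x hx => by rw [arcsineWeight_eq_zero hx, mul_zero]]
  simp only [arcsineWeight, semicircle, Real.sqrt_inv]

lemma integral_arcsineWeight : ∫ x, arcsineWeight x = Real.pi := by
  simpa using integral_mul_arcsineWeight fun _ => 1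

lemma integral_id_mul_arcsineWeight : ∫ x, x * arcsineWeight x = 0 := by
  simpa using integral_mul_arcsineWeight fun x => x

end ArcsineWeight

section TruncHilbert

variable {E : Type*} [NormedAddCommGroup E] [NormedSpace ℝ E] {f : ℝ → E}

lemma integrableOn_inv_sub_smul (hf : Integrable f) {ε : ℝ} (hε : 0 < ε) (t : ℝ) :
    IntegrableOn (fun x => (x - t)⁻¹ • f x) {x | ε ≤ |x - t|} := by
  refine (hf.norm.const_mul ε⁻¹).integrableOn.mono'
    ((measurable_sub_const t).inv.aestronglyMeasurable.smul hf.1).restrict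
    (ae_restrict_of_forall_mem (measurableSet_le_abs_sub ε t) fun x hx => ?_)
  rw [norm_smul, norm_inv, Real.norm_eq_abs]
  gcongr
  exact hx

lemma truncHilbert_sub {g : ℝ → E} (hf : Integrable f) (hg : Integrable g) {ε : ℝ} (hε : 0 < ε)
    (t : ℝ) :
    truncHilbert (fun x => f x - g x) ε t = truncHilbert f ε t - truncHilbert g ε t := by
  simp only [truncHilbert, smul_sub]
  exact integral_sub (integrableOn_inv_sub_smul hf hε t) (integrableOn_inv_sub_smul hg hε t)

lemma tendsto_setIntegral_le_abs_sub (hf : Integrable f) (t : ℝ) :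
    Tendsto (fun ε : ℝ => ∫ x in {x | ε ≤ |x - t|}, f x) (𝓝[>] 0) (𝓝 (∫ x, f x)) := by
  simp_rw [← integral_indicator (measurableSet_le_abs_sub _ t)]
  refine tendsto_integral_filter_of_dominated_convergence (fun x => ‖f x‖)
    (.of_forall fun ε => hf.1.indicator (measurableSet_le_abs_sub ε t))
    (.of_forall fun ε => .of_forall fun x => norm_indicator_le_norm_self _ _) hf.norm ?_
  filter_upwards [Measure.ae_ne volume t] with x hx
  refine tendsto_const_nhds.congr' ?_
  filter_upwards [Ioo_mem_nhdsGT (abs_pos.2 (sub_ne_zero.2 hx))] with ε hε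
  exact (indicator_of_mem (s := {x | ε ≤ |x - t|}) hε.2.le f).symm

lemma truncHilbert_id_smul (hf : Integrable f) {ε : ℝ} (hε : 0 < ε) (t : ℝ) :
    truncHilbert (fun x => x • f x) ε t
      = t • truncHilbert f ε t + ∫ x in {x | ε ≤ |x - t|}, f x := by
  have hinteg : IntegrableOn (fun x => t • (x - t)⁻¹ • f x) {x | ε ≤ |x - t|} :=
    (integrableOn_inv_sub_smul hf hε t).smul t
  rw [truncHilbert, truncHilbert, ← integral_smul, ← integral_add hinteg hf.integrableOn]
  refine setIntegral_congr_fun (measurableSet_le_abs_sub ε t) fun x hx => ?_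
  have hne : x - t ≠ 0 := abs_pos.1 (hε.trans_le hx)
  have hcoef : (x - t)⁻¹ * x = t * (x - t)⁻¹ + 1 := by
    field_simp
    ring
  simp only [smul_smul, hcoef, add_smul, one_smul]

lemma tendsto_truncHilbert_id_smul (hf : Integrable f) {t : ℝ} {l : E}
    (h : Tendsto (fun ε => truncHilbert f ε t) (𝓝[>] 0) (𝓝 l)) :
    Tendsto (fun ε => truncHilbert (fun x => x • f x) ε t) (𝓝[>] 0)
      (𝓝 (t • l + ∫ x, f x)) := by
  refine ((h.const_smul t).add (tendsto_setIntegral_le_abs_sub hf t)).congr' ?_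
  filter_upwards [self_mem_nhdsWithin] with ε hε
  exact (truncHilbert_id_smul hf hε t).symm

lemma truncHilbert_eq_add_intervalIntegral (hf : Integrable f)
    (h0 : ∀ x ∉ Ioo (-1 : ℝ) 1, f x = 0) {ε t : ℝ} (hε : 0 < ε) (hl : -1 ≤ t - ε)
    (hr : t + ε ≤ 1) :
    truncHilbert f ε t
      = (∫ x in -1..(t - ε), (x - t)⁻¹ • f x) + ∫ x in (t + ε)..1, (x - t)⁻¹ • f x := by
  have hset : {x : ℝ | ε ≤ |x - t|} = Iic (t - ε) ∪ Ici (t + ε) := by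
    ext x
    change ε ≤ |x - t| ↔ x ≤ t - ε ∨ t + ε ≤ x
    grind
  have hinteg := integrableOn_inv_sub_smul hf hε t
  rw [hset, integrableOn_union] at hinteg
  rw [truncHilbert, hset, setIntegral_union (by grind) measurableSet_Ici hinteg.1 hinteg.2,
    intervalIntegral.integral_of_le hl, intervalIntegral.integral_of_le hr,
    ← integral_Icc_eq_integral_Ioc (x := t + ε)]
  congr 1
  · refine setIntegral_eq_of_subset_of_forall_sdiff_eq_zero measurableSet_Iic
      Ioc_subset_Iic_self fun x hx => ?_
    rw [h0 x fun h => hx.2 ⟨h.1, hx.1⟩, smul_zero]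
  · refine setIntegral_eq_of_subset_of_forall_sdiff_eq_zero measurableSet_Ici
      Icc_subset_Ici_self fun x hx => ?_
    rw [h0 x fun h => hx.2 ⟨hx.1, h.2.le⟩, smul_zero]

end TruncHilbert

section HilbertArcsine

lemma one_sub_mul_add_semicircle_pos {t x : ℝ} (ht : t ∈ Ioo (-1 : ℝ) 1)
    (hx : x ∈ Icc (-1 : ℝ) 1) : 0 < 1 - x * t + semicircle x * semicircle t := by
  have := mul_nonneg (semicircle_nonneg x) (semicircle_nonneg t)
  nlinarith [abs_mul x t, abs_lt.2 ht, abs_le.2 hx, le_abs_self (x * t), abs_nonneg t]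

/-- A primitive of `x ↦ arcsineWeight x / (x - t)` on either side of `t`. Since
`Real.log x = Real.log |x|`, one formula serves both sides. -/
def arcsinePrimitive (t x : ℝ) : ℝ :=
  (Real.log (x - t) - Real.log (1 - x * t + semicircle x * semicircle t)) / semicircle t

lemma continuousOn_arcsinePrimitive {t : ℝ} (ht : t ∈ Ioo (-1 : ℝ) 1) {s : Set ℝ}
    (hs : s ⊆ Icc (-1) 1) (hts : t ∉ s) : ContinuousOn (arcsinePrimitive t) s := by
  have hc := continuous_semicircle
  refine ((ContinuousOn.log (by fun_prop) fun x hx => ?_).sub (ContinuousOn.log (by fun_prop)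
    fun x hx => (one_sub_mul_add_semicircle_pos ht (hs hx)).ne')).div_const _
  exact sub_ne_zero.2 fun h => hts (h ▸ hx)

lemma hasDerivAt_semicircle {x : ℝ} (hx : x ∈ Ioo (-1 : ℝ) 1) :
    HasDerivAt semicircle (-x / semicircle x) x := by
  have h : HasDerivAt (fun x : ℝ => 1 - x ^ 2) (-(2 * x)) x := by
    simpa using (hasDerivAt_pow 2 x).const_sub 1
  refine (h.sqrt (one_sub_sq_pos hx).ne').congr_deriv ?_
  rw [neg_div, neg_div, mul_div_mul_left _ _ two_ne_zero, semicircle]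

lemma hasDerivAt_arcsinePrimitive {t x : ℝ} (ht : t ∈ Ioo (-1 : ℝ) 1)
    (hx : x ∈ Ioo (-1 : ℝ) 1) (hxt : x ≠ t) :
    HasDerivAt (arcsinePrimitive t) ((x - t)⁻¹ • arcsineWeight x) x := by
  have hN := (one_sub_mul_add_semicircle_pos ht (Ioo_subset_Icc_self hx)).ne'
  have hne : x - t ≠ 0 := sub_ne_zero.2 hxt
  have hlog : HasDerivAt (fun x => x - t) 1 x := (hasDerivAt_id x).sub_const t
  have hlin : HasDerivAt (fun x : ℝ => 1 - x * t) (-t) x := by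
    simpa using ((hasDerivAt_id x).mul_const t).const_sub 1
  have hden := hlin.add ((hasDerivAt_semicircle hx).mul_const (semicircle t))
  refine (((hlog.log hne).sub (hden.log hN)).div_const (semicircle t)).congr_deriv ?_
  have hsx := semicircle_pos hx
  have hst := semicircle_pos ht
  rw [arcsineWeight, smul_eq_mul]
  simp only [Pi.add_apply]
  field_simp
  linear_combination (-semicircle x) * semicircle_sq ht + semicircle t * semicircle_sq hx

lemma arcsinePrimitive_neg_one (t : ℝ) : arcsinePrimitive t (-1) = 0 := by
  rw [arcsinePrimitive, semicircle_eq_zero (by simp), ← Real.log_neg_eq_log (-1 - t)]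
  ring_nf

lemma arcsinePrimitive_one (t : ℝ) : arcsinePrimitive t 1 = 0 := by
  rw [arcsinePrimitive, semicircle_eq_zero (by simp)]
  ring_nf

lemma truncHilbert_arcsineWeight {t ε : ℝ} (ht : t ∈ Ioo (-1 : ℝ) 1) (hε : 0 < ε)
    (hl : -1 ≤ t - ε) (hr : t + ε ≤ 1) :
    truncHilbert arcsineWeight ε t = arcsinePrimitive t (t - ε) - arcsinePrimitive t (t + ε) := by
  have hw := isLLogL_arcsineWeight
  have hinteg := integrableOn_inv_sub_smul hw.integrable hε t
  have hleft : Icc (-1) (t - ε) ⊆ {x : ℝ | ε ≤ |x - t|} := fun x hx =>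
    show ε ≤ |x - t| from le_abs.2 (.inr (by linarith [hx.2]))
  have hright : Icc (t + ε) 1 ⊆ {x : ℝ | ε ≤ |x - t|} := fun x hx =>
    show ε ≤ |x - t| from le_abs.2 (.inl (by linarith [hx.1]))
  rw [truncHilbert_eq_add_intervalIntegral hw.integrable hw.eq_zero hε hl hr,
    intervalIntegral.integral_eq_sub_of_hasDerivAt_of_le hl
      (continuousOn_arcsinePrimitive ht (Icc_subset_Icc_right (by linarith [ht.2]))
        fun h => by linarith [h.2])
      (fun x hx => hasDerivAt_arcsinePrimitive ht ⟨hx.1, by linarith [hx.2, ht.2]⟩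
        (by linarith [hx.2] : x < t).ne)
      ((intervalIntegrable_iff_integrableOn_Icc_of_le hl).2 (hinteg.mono_set hleft)),
    intervalIntegral.integral_eq_sub_of_hasDerivAt_of_le hr
      (continuousOn_arcsinePrimitive ht (Icc_subset_Icc_left (by linarith [ht.1]))
        fun h => by linarith [h.1])
      (fun x hx => hasDerivAt_arcsinePrimitive ht ⟨by linarith [hx.1, ht.1], hx.2⟩
        (by linarith [hx.1] : t < x).ne')
      ((intervalIntegrable_iff_integrableOn_Icc_of_le hr).2 (hinteg.mono_set hright)),
    arcsinePrimitive_neg_one, arcsinePrimitive_one]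
  ring

lemma tendsto_truncHilbert_arcsineWeight {t : ℝ} (ht : t ∈ Ioo (-1 : ℝ) 1) :
    Tendsto (fun ε => truncHilbert arcsineWeight ε t) (𝓝[>] 0) (𝓝 0) := by
  have hc := continuous_semicircle
  have hN := (one_sub_mul_add_semicircle_pos ht (Ioo_subset_Icc_self ht)).ne'
  have hlim : Tendsto (fun ε => (Real.log (1 - (t + ε) * t + semicircle (t + ε) * semicircle t)
      - Real.log (1 - (t - ε) * t + semicircle (t - ε) * semicircle t)) / semicircle t)
      (𝓝 0) (𝓝 0) := by
    refine (((ContinuousAt.log (by fun_prop) (by simpa using hN)).sub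
      (ContinuousAt.log (by fun_prop) (by simpa using hN))).div_const _).tendsto.trans_eq ?_
    simp
  have hmin : 0 < min (1 - t) (1 + t) := lt_min (by linarith [ht.2]) (by linarith [ht.1])
  refine (hlim.mono_left nhdsWithin_le_nhds).congr' ?_
  filter_upwards [Ioo_mem_nhdsGT hmin] with ε hε
  obtain ⟨hr, hl⟩ := lt_min_iff.1 hε.2
  rw [truncHilbert_arcsineWeight ht hε.1 (by linarith) (by linarith), arcsinePrimitive,
    arcsinePrimitive, sub_sub_cancel_left, add_sub_cancel_left, Real.log_neg_eq_log]
  ring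

lemma tendsto_truncHilbert_semicircle {t : ℝ} (ht : t ∈ Ioo (-1 : ℝ) 1) :
    Tendsto (fun ε => truncHilbert semicircle ε t) (𝓝[>] 0) (𝓝 (-(Real.pi * t))) := by
  have hw := isLLogL_arcsineWeight
  have hlim := tendsto_truncHilbert_arcsineWeight ht
  have hx := tendsto_truncHilbert_id_smul hw.integrable hlim
  have hxx := tendsto_truncHilbert_id_smul hw.id_smul.integrable hx
  have hval : 0 - (t • (t • 0 + ∫ x, arcsineWeight x) + ∫ x, x • arcsineWeight x)
      = -(Real.pi * t) := by
    simp only [smul_eq_mul, integral_id_mul_arcsineWeight, integral_arcsineWeight]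
    ring
  rw [← hval]
  refine (hlim.sub hxx).congr' ?_
  filter_upwards [self_mem_nhdsWithin] with ε hε
  rw [← truncHilbert_sub hw.integrable hw.id_smul.id_smul.integrable hε]
  congr 1 with x
  exact (semicircle_eq_arcsineWeight_sub x).symm

end HilbertArcsine

section HolderConjugate

lemma intervalIntegrable_abs_rpow {s : ℝ} (hs : -1 < s) {a : ℝ} (ha : 0 ≤ a) :
    IntervalIntegrable (fun u : ℝ => |u| ^ s) volume (-a) a := by
  have hpos : IntervalIntegrable (fun u : ℝ => |u| ^ s) volume 0 a := by
    refine (intervalIntegral.intervalIntegrable_rpow' hs).congr fun u hu => ?_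
    rw [uIoc_of_le ha] at hu
    rw [abs_of_pos hu.1]
  have hneg : IntervalIntegrable (fun u : ℝ => |u| ^ s) volume (-a) 0 := by
    simpa using (hpos.comp_sub_left 0).symm
  exact hneg.trans hpos

lemma abs_conjPoissonKer_le_inv_abs (y s : ℝ) : |conjPoissonKer y s| ≤ |s|⁻¹ := by
  rcases eq_or_ne s 0 with rfl | hs
  · simp [conjPoissonKer]
  · have : 0 < |s| := abs_pos.2 hs
    rw [conjPoissonKer, abs_div, abs_of_nonneg (by positivity : 0 ≤ s ^ 2 + y ^ 2), inv_eq_one_div,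
      div_le_div_iff₀ (by positivity) this, ← sq, sq_abs]
    linarith [sq_nonneg y]

lemma integral_conjPoissonKer_symm (y a : ℝ) : ∫ u in -a..a, conjPoissonKer y u = 0 := by
  have h := intervalIntegral.integral_comp_neg (a := -a) (b := a) (conjPoissonKer y)
  simp only [conjPoissonKer_neg, intervalIntegral.integral_neg, neg_neg] at h
  linarith

lemma conjPoissonInt_eq_intervalIntegral_sub {g : ℝ → ℝ} (hg : Continuous g)
    (h0 : ∀ x ∉ Ioo (-1 : ℝ) 1, g x = 0) {y t : ℝ} (hy : 0 < y) (ht : t ∈ Ioo (-1 : ℝ) 1) :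
    conjPoissonInt g y t = ∫ u in (-2)..2, conjPoissonKer y u * (g (u + t) - g t) := by
  have hQ := continuous_conjPoissonKer hy
  have hgt : Continuous fun u => g (u + t) := hg.comp (continuous_add_const t)
  have hsupp : ∀ u ∉ Ioc (-2 : ℝ) 2, conjPoissonKer y u * g (u + t) = 0 := fun u hu => by
    rw [h0 (u + t) fun h => hu ⟨by linarith [h.1, ht.2], by linarith [h.2, ht.1]⟩, mul_zero]
  have hinteg : IntervalIntegrable (fun u => conjPoissonKer y u * g (u + t)) volume (-2) 2 :=
    (hQ.mul hgt).intervalIntegrable _ _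
  have hinteg' : IntervalIntegrable (fun u => conjPoissonKer y u * g t) volume (-2) 2 :=
    (hQ.mul continuous_const).intervalIntegrable _ _
  simp_rw [mul_sub]
  rw [intervalIntegral.integral_sub hinteg hinteg', intervalIntegral.integral_mul_const,
    integral_conjPoissonKer_symm, zero_mul, sub_zero,
    intervalIntegral.integral_of_le (by norm_num),
    setIntegral_eq_integral_of_forall_compl_eq_zero hsupp, conjPoissonInt,
    ← integral_add_right_eq_self _ t]
  simp only [add_sub_cancel_right, smul_eq_mul]

lemma exists_abs_conjPoissonInt_le_of_holderWith {C r : NNReal} (hr : 0 < r) {g : ℝ → ℝ}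
    (hg : HolderWith C r g) (h0 : ∀ x ∉ Ioo (-1 : ℝ) 1, g x = 0) :
    ∃ B, ∀ y > 0, ∀ t ∈ Ioo (-1 : ℝ) 1, |conjPoissonInt g y t| ≤ B := by
  refine ⟨∫ u in (-2)..2, C * |u| ^ ((r : ℝ) - 1), fun y hy t ht => ?_⟩
  rw [conjPoissonInt_eq_intervalIntegral_sub (hg.continuous hr) h0 hy ht, ← Real.norm_eq_abs]
  have hr1 : (-1 : ℝ) < r - 1 := by
    have : (0 : ℝ) < r := hr
    linarith
  refine intervalIntegral.norm_integral_le_of_norm_le (by norm_num) (ae_of_all _ fun u _ => ?_)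
    ((intervalIntegrable_abs_rpow hr1 zero_le_two).const_mul _)
  have hdist := hg.dist_le (u + t) t
  rw [Real.dist_eq, Real.dist_eq, add_sub_cancel_right] at hdist
  rcases eq_or_ne u 0 with rfl | hu
  · simpa using mul_nonneg C.2 (Real.rpow_nonneg le_rfl _)
  calc ‖conjPoissonKer y u * (g (u + t) - g t)‖
      ≤ |u|⁻¹ * (C * |u| ^ (r : ℝ)) := by
        rw [norm_mul]
        exact mul_le_mul (abs_conjPoissonKer_le_inv_abs y u) hdist (abs_nonneg _) (by positivity)
    _ = C * |u| ^ ((r : ℝ) - 1) := by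
        rw [Real.rpow_sub_one (abs_ne_zero.2 hu)]
        ring

lemma semicircle_sub_le (x t : ℝ) : semicircle x - semicircle t ≤ √(2 * |x - t|) := by
  by_cases hx : x ∈ Ioo (-1 : ℝ) 1
  · have key : 1 - x ^ 2 ≤ semicircle t ^ 2 + 2 * |x - t| := by
      by_cases ht : t ∈ Ioo (-1 : ℝ) 1
      · rw [semicircle_sq ht]
        rcases abs_cases (x - t) with h | h <;> nlinarith [hx.1, hx.2, ht.1, ht.2]
      · have ht' : t ≤ -1 ∨ 1 ≤ t := by grind
        rw [semicircle_eq_zero ht]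
        rcases abs_cases (x - t) with h | h <;> rcases ht' with ht' | ht' <;>
          nlinarith [hx.1, hx.2]
    rw [sub_le_iff_le_add', semicircle, Real.sqrt_le_left
      (add_nonneg (semicircle_nonneg t) (Real.sqrt_nonneg _))]
    have hsq := Real.sq_sqrt (by positivity : 0 ≤ 2 * |x - t|)
    nlinarith [mul_nonneg (semicircle_nonneg t) (Real.sqrt_nonneg (2 * |x - t|))]
  · rw [semicircle_eq_zero hx]
    linarith [semicircle_nonneg t, Real.sqrt_nonneg (2 * |x - t|)]

lemma holderWith_semicircle : HolderWith (NNReal.sqrt 2) (1 / 2) semicircle := fun x t => by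
  have h : dist (semicircle x) (semicircle t) ≤ √2 * dist x t ^ (1 / 2 : ℝ) := by
    rw [← Real.sqrt_eq_rpow, ← Real.sqrt_mul zero_le_two, Real.dist_eq, Real.dist_eq]
    have hswap := semicircle_sub_le t x
    rw [abs_sub_comm] at hswap
    exact abs_sub_le_iff.2 ⟨semicircle_sub_le x t, hswap⟩
  rw [edist_dist, edist_dist, ENNReal.ofReal_rpow_of_nonneg dist_nonneg (by positivity),
    ← ENNReal.ofReal_coe_nnreal, ← ENNReal.ofReal_mul (by positivity)]
  exact ENNReal.ofReal_le_ofReal (by simpa using h)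

end HolderConjugate

section Moments

lemma integrable_mul_of_eq_zero {φ g : ℝ → ℝ} {a b : ℝ} (hφ : Integrable φ)
    (h0 : ∀ x ∉ Icc a b, φ x = 0) (hg : Continuous g) : Integrable fun x => φ x * g x := by
  refine (integrableOn_iff_integrable_of_support_subset (s := Icc a b) fun x hx => ?_).1
    (hφ.integrableOn.mul_continuousOn hg.continuousOn isCompact_Icc)
  exact not_imp_comm.1 (h0 x) (left_ne_zero_of_mul hx)

lemma integral_mul_eval_eq_zero {φ : ℝ → ℝ} {a b : ℝ} (hφ : Integrable φ)
    (h0 : ∀ x ∉ Icc a b, φ x = 0) (hm : ∀ k : ℕ, ∫ x, φ x * x ^ k = 0) (p : Polynomial ℝ) :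
    ∫ x, φ x * p.eval x = 0 := by
  have hinteg : ∀ q : Polynomial ℝ, Integrable fun x => φ x * q.eval x := fun q =>
    integrable_mul_of_eq_zero hφ h0 q.continuous
  induction p using Polynomial.induction_on' with
  | add p q hp hq =>
    simp only [Polynomial.eval_add, mul_add]
    rw [integral_add (hinteg p) (hinteg q), hp, hq, add_zero]
  | monomial k c =>
    simp only [Polynomial.eval_monomial, mul_left_comm _ c]
    rw [integral_const_mul, hm k, mul_zero]

lemma ae_eq_zero_of_integral_mul_pow_eq_zero {φ : ℝ → ℝ} {a b : ℝ} (hφ : Integrable φ)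
    (h0 : ∀ x ∉ Icc a b, φ x = 0) (hm : ∀ k : ℕ, ∫ x, φ x * x ^ k = 0) : ∀ᵐ x, φ x = 0 := by
  refine ae_eq_zero_of_integral_contDiff_smul_eq_zero hφ.locallyIntegrable fun g hg _ => ?_
  simp only [smul_eq_mul, mul_comm (g _)]
  have happrox : ∀ ε > 0, |∫ x, φ x * g x| ≤ ε * ∫ x, |φ x| := by
    intro ε hε
    obtain ⟨p, hp⟩ := exists_polynomial_near_of_continuousOn a b g hg.continuous.continuousOn ε hε
    rw [← sub_zero (∫ x, φ x * g x), ← integral_mul_eval_eq_zero hφ h0 hm p,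
      ← integral_sub (integrable_mul_of_eq_zero hφ h0 hg.continuous)
        (integrable_mul_of_eq_zero hφ h0 p.continuous), ← integral_const_mul, ← Real.norm_eq_abs]
    refine norm_integral_le_of_norm_le (hφ.abs.const_mul ε) (.of_forall fun x => ?_)
    by_cases hx : x ∈ Icc a b
    · rw [← mul_sub, norm_mul, mul_comm, Real.norm_eq_abs, Real.norm_eq_abs, abs_sub_comm]
      gcongr
      exact (hp x hx).le
    · simp [h0 x hx]
  have hlim : Tendsto (fun ε => ε * ∫ x, |φ x|) (𝓝[>] 0) (𝓝 0) := by
    simpa using (tendsto_id.mul_const (∫ x, |φ x|)).mono_left (nhdsWithin_le_nhds (a := (0 : ℝ)))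
  exact abs_nonpos_iff.1 (ge_of_tendsto hlim (eventually_nhdsWithin_of_forall happrox))

end Moments

section HilbertKernel

lemma IsLLogL.const_mul {f : ℝ → ℝ} (hf : IsLLogL f) (c : ℝ) : IsLLogL fun x => c * f x where
  integrable := hf.integrable.const_mul c
  integrable_mul_posLog := by
    have hmeas := hf.integrable.1.aemeasurable.const_mul c
    refine (((hf.integrable.abs.mul_const (Real.posLog c)).add
      hf.integrable_mul_posLog).const_mul |c|).mono' (hmeas.abs.mul
        (Real.continuous_posLog.measurable.comp_aemeasurable hmeas)).aestronglyMeasurable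
      (.of_forall fun x => ?_)
    rw [Real.norm_of_nonneg (mul_nonneg (abs_nonneg _) Real.posLog_nonneg)]
    calc |c * f x| * Real.posLog (c * f x)
        ≤ |c * f x| * (Real.posLog c + Real.posLog (f x)) := by
          gcongr
          exact Real.posLog_mul
      _ = |c| * (|f x| * Real.posLog c + |f x| * Real.posLog (f x)) := by
          rw [abs_mul]
          ring
  eq_zero x hx := by rw [hf.eq_zero x hx, mul_zero]

lemma IsLLogL.sub {f g : ℝ → ℝ} (hf : IsLLogL f) (hg : IsLLogL g) :
    IsLLogL fun x => f x - g x where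
  integrable := hf.integrable.sub hg.integrable
  integrable_mul_posLog := by
    have hmeas := hf.integrable.1.aemeasurable.sub hg.integrable.1.aemeasurable
    refine ((hf.const_mul 2).integrable_mul_posLog.add
      (hg.const_mul 2).integrable_mul_posLog).mono' (hmeas.abs.mul
        (Real.continuous_posLog.measurable.comp_aemeasurable hmeas)).aestronglyMeasurable
      (.of_forall fun x => ?_)
    have hmono : ∀ {a b : ℝ}, |a| ≤ |b| → |a| * Real.posLog a ≤ |b| * Real.posLog b := by
      intro a b h
      rw [← Real.posLog_abs a, ← Real.posLog_abs b]
      exact mul_le_mul h (Real.posLog_le_posLog (abs_nonneg _) h) Real.posLog_nonneg (abs_nonneg _)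
    have hnonneg : ∀ a : ℝ, 0 ≤ |a| * Real.posLog a := fun a =>
      mul_nonneg (abs_nonneg a) Real.posLog_nonneg
    rw [Real.norm_of_nonneg (hnonneg _)]
    have htri := abs_sub (f x) (g x)
    rcases le_total |g x| |f x| with h | h
    · refine (hmono ?_).trans (le_add_of_nonneg_right (hnonneg _))
      rw [abs_mul, abs_two]
      linarith
    · refine (hmono ?_).trans (le_add_of_nonneg_left (hnonneg _))
      rw [abs_mul, abs_two]
      linarith
  eq_zero x hx := by rw [hf.eq_zero x hx, hg.eq_zero x hx, sub_zero]

/-- `f` lies in `L log L` of `(-1, 1)` and its finite Hilbert transform vanishes almost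
everywhere there. -/
structure IsHilbertNull (f : ℝ → ℝ) : Prop extends IsLLogL f where
  ae_tendsto : ∀ᵐ t, t ∈ Ioo (-1 : ℝ) 1 → Tendsto (fun ε => truncHilbert f ε t) (𝓝[>] 0) (𝓝 0)

lemma isHilbertNull_arcsineWeight : IsHilbertNull arcsineWeight where
  toIsLLogL := isLLogL_arcsineWeight
  ae_tendsto := .of_forall fun _ => tendsto_truncHilbert_arcsineWeight

lemma truncHilbert_const_mul (f : ℝ → ℝ) (c ε t : ℝ) :
    truncHilbert (fun x => c * f x) ε t = c * truncHilbert f ε t := by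
  simp only [truncHilbert, smul_eq_mul, mul_left_comm _ c, integral_const_mul]

lemma IsHilbertNull.const_mul {f : ℝ → ℝ} (hf : IsHilbertNull f) (c : ℝ) :
    IsHilbertNull fun x => c * f x where
  toIsLLogL := hf.toIsLLogL.const_mul c
  ae_tendsto := by
    filter_upwards [hf.ae_tendsto] with t h ht
    simpa only [truncHilbert_const_mul, mul_zero] using (h ht).const_mul c

lemma IsHilbertNull.sub {f g : ℝ → ℝ} (hf : IsHilbertNull f) (hg : IsHilbertNull g) :
    IsHilbertNull fun x => f x - g x where
  toIsLLogL := hf.toIsLLogL.sub hg.toIsLLogL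
  ae_tendsto := by
    filter_upwards [hf.ae_tendsto, hg.ae_tendsto] with t h h' ht
    refine ((h ht).sub (h' ht)).congr' ?_ |>.trans_eq (by rw [sub_zero])
    filter_upwards [self_mem_nhdsWithin] with ε hε
    exact (truncHilbert_sub hf.integrable hg.integrable hε t).symm

lemma IsHilbertNull.id_smul {f : ℝ → ℝ} (hf : IsHilbertNull f) (h0 : ∫ x, f x = 0) :
    IsHilbertNull fun x => x • f x where
  toIsLLogL := hf.toIsLLogL.id_smul
  ae_tendsto := by
    filter_upwards [hf.ae_tendsto] with t h ht
    simpa [h0] using tendsto_truncHilbert_id_smul hf.integrable (h ht)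

lemma ae_tendsto_conjPoissonInt {f l : ℝ → ℝ} (hf : Integrable f) {s : Set ℝ}
    (h : ∀ᵐ t, t ∈ s → Tendsto (fun ε => truncHilbert f ε t) (𝓝[>] 0) (𝓝 (l t))) :
    ∀ᵐ t, t ∈ s → Tendsto (fun y => conjPoissonInt f y t) (𝓝[>] 0) (𝓝 (l t)) := by
  filter_upwards [h, ae_tendsto_truncHilbert_sub_conjPoissonInt hf] with t ht hsub hts
  simpa using (ht hts).sub hsub

lemma integrable_semicircle : Integrable semicircle :=
  continuous_semicircle.integrable_of_hasCompactSupport <|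
    .intro isCompact_Icc fun _ hx => semicircle_eq_zero fun h => hx (Ioo_subset_Icc_self h)

lemma tendsto_integral_mul_conjPoissonInt_semicircle {f : ℝ → ℝ} (hf : Integrable f)
    (h0 : ∀ x ∉ Ioo (-1 : ℝ) 1, f x = 0) :
    Tendsto (fun y => ∫ x, f x * conjPoissonInt semicircle y x) (𝓝[>] 0)
      (𝓝 (∫ x, f x * -(Real.pi * x))) := by
  obtain ⟨B, hB⟩ := exists_abs_conjPoissonInt_le_of_holderWith (by norm_num)
    holderWith_semicircle fun _ => semicircle_eq_zero
  refine tendsto_integral_filter_of_dominated_convergence (fun x => |f x| * B) ?_ ?_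
    (hf.abs.mul_const B) ?_
  · filter_upwards [self_mem_nhdsWithin] with y hy
    exact hf.1.mul (continuous_conjPoissonInt integrable_semicircle hy).aestronglyMeasurable
  · filter_upwards [self_mem_nhdsWithin] with y hy
    refine .of_forall fun x => ?_
    by_cases hx : x ∈ Ioo (-1 : ℝ) 1
    · rw [norm_mul, Real.norm_eq_abs]
      gcongr
      exact hB y hy x hx
    · simp [h0 x hx]
  · filter_upwards [ae_tendsto_conjPoissonInt integrable_semicircle
      (.of_forall fun _ => tendsto_truncHilbert_semicircle)] with x hx
    by_cases hxI : x ∈ Ioo (-1 : ℝ) 1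
    · exact (hx hxI).const_mul (f x)
    · simp [h0 x hxI]

lemma IsHilbertNull.tendsto_integral_semicircle_mul_conjPoissonInt {f : ℝ → ℝ}
    (hf : IsHilbertNull f) {y : ℕ → ℝ} (hy : Tendsto y atTop (𝓝[>] 0)) (hy0 : ∀ n, 0 < y n) :
    Tendsto (fun n => ∫ t, semicircle t * conjPoissonInt f (y n) t) atTop (𝓝 0) := by
  have hL1 := hf.toIsLLogL.tendsto_integral_abs_conjPoissonInt hy0 measurableSet_Ioo
    (by simp) ((ae_tendsto_conjPoissonInt hf.integrable hf.ae_tendsto).mono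
      fun t h ht => (h ht).comp hy)
  refine squeeze_zero_norm (fun n => ?_) hL1
  rw [← setIntegral_eq_integral_of_forall_compl_eq_zero (s := Ioo (-1) 1) fun x hx => by
    rw [semicircle_eq_zero hx, zero_mul]]
  have hinteg : IntegrableOn (conjPoissonInt f (y n)) (Ioo (-1) 1) :=
    (continuous_conjPoissonInt hf.integrable (hy0 n)).integrableOn_Icc.mono_set Ioo_subset_Icc_self
  refine norm_integral_le_of_norm_le hinteg.abs (.of_forall fun t => ?_)
  rw [norm_mul, Real.norm_of_nonneg (semicircle_nonneg t)]
  exact mul_le_of_le_one_left (norm_nonneg _) (semicircle_le_one t)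

lemma IsHilbertNull.integral_id_smul_eq_zero {f : ℝ → ℝ} (hf : IsHilbertNull f) :
    ∫ x, x • f x = 0 := by
  have hy0 : ∀ n : ℕ, (0 : ℝ) < 1 / (n + 1) := fun n => by positivity
  have hy : Tendsto (fun n : ℕ => 1 / ((n : ℝ) + 1)) atTop (𝓝[>] 0) :=
    tendsto_nhdsWithin_iff.2 ⟨tendsto_one_div_add_atTop_nhds_zero_nat, .of_forall hy0⟩
  have hleft := (hf.tendsto_integral_semicircle_mul_conjPoissonInt hy hy0).neg
  have hright := (tendsto_integral_mul_conjPoissonInt_semicircle hf.integrable hf.eq_zero).comp hy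
  have hpi : ∫ x, f x * -(Real.pi * x) = -Real.pi * ∫ x, x • f x := by
    rw [← integral_const_mul]
    congr 1 with x
    rw [smul_eq_mul]
    ring
  have hzero : -Real.pi * ∫ x, x • f x = 0 := by
    rw [← hpi, ← neg_zero]
    refine tendsto_nhds_unique hright (hleft.congr fun n => ?_)
    rw [integral_mul_conjPoissonInt hf.integrable integrable_semicircle (hy0 n), neg_neg,
      Function.comp_apply]
  exact (mul_eq_zero.1 hzero).resolve_left (neg_ne_zero.2 Real.pi_ne_zero)

lemma IsHilbertNull.integral_mul_pow_eq_zero {f : ℝ → ℝ} (hf : IsHilbertNull f)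
    (h0 : ∫ x, f x = 0) (k : ℕ) : ∫ x, f x * x ^ k = 0 := by
  induction k generalizing f with
  | zero => simpa using h0
  | succ k ih =>
    rw [← ih (hf.id_smul h0) hf.integral_id_smul_eq_zero]
    congr 1 with x
    rw [smul_eq_mul]
    ring

theorem IsHilbertNull.exists_ae_eq_mul_arcsineWeight {f : ℝ → ℝ} (hf : IsHilbertNull f) :
    ∃ c : ℝ, ∀ᵐ x, f x = c * arcsineWeight x := by
  refine ⟨(∫ x, f x) / Real.pi, ?_⟩
  have hsub := hf.sub (isHilbertNull_arcsineWeight.const_mul ((∫ x, f x) / Real.pi))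
  have hinteg : ∫ x, (f x - (∫ x, f x) / Real.pi * arcsineWeight x) = 0 := by
    rw [integral_sub hf.integrable (isLLogL_arcsineWeight.integrable.const_mul _),
      integral_const_mul, integral_arcsineWeight, div_mul_cancel₀ _ Real.pi_ne_zero, sub_self]
  filter_upwards [ae_eq_zero_of_integral_mul_pow_eq_zero hsub.integrable
    (fun x hx => hsub.eq_zero x fun h => hx (Ioo_subset_Icc_self h))
    (hsub.integral_mul_pow_eq_zero hinteg)] with x hx
  exact sub_eq_zero.1 hx

end HilbertKernel

section ComplexValued

lemma map_truncHilbert {E F : Type*} [NormedAddCommGroup E] [NormedSpace ℝ E] [CompleteSpace E]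
    [NormedAddCommGroup F] [NormedSpace ℝ F] [CompleteSpace F] {f : ℝ → E} (L : E →L[ℝ] F)
    (hf : Integrable f) {ε : ℝ} (hε : 0 < ε) (t : ℝ) :
    L (truncHilbert f ε t) = truncHilbert (fun x => L (f x)) ε t := by
  rw [truncHilbert, ← L.integral_comp_comm (integrableOn_inv_sub_smul hf hε t)]
  simp only [map_smul, truncHilbert]

lemma tendsto_map_truncHilbert {E F : Type*} [NormedAddCommGroup E] [NormedSpace ℝ E]
    [CompleteSpace E] [NormedAddCommGroup F] [NormedSpace ℝ F] [CompleteSpace F] {f : ℝ → E}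
    {l : E} {t : ℝ} (L : E →L[ℝ] F) (hf : Integrable f)
    (h : Tendsto (fun ε => truncHilbert f ε t) (𝓝[>] 0) (𝓝 l)) :
    Tendsto (fun ε => truncHilbert (fun x => L (f x)) ε t) (𝓝[>] 0) (𝓝 (L l)) := by
  refine ((L.continuous.tendsto l).comp h).congr' ?_
  filter_upwards [self_mem_nhdsWithin] with ε hε
  exact map_truncHilbert L hf hε t

lemma ae_exists_tendsto_truncHilbert_complex {f : ℝ → ℂ} (hf : Integrable f) :
    ∀ᵐ t, ∃ l, Tendsto (fun ε => truncHilbert f ε t) (𝓝[>] 0) (𝓝 l) := by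
  filter_upwards [ae_exists_tendsto_truncHilbert hf.re, ae_exists_tendsto_truncHilbert hf.im]
    with t ⟨a, ha⟩ ⟨b, hb⟩
  refine ⟨(a : ℂ) + b * Complex.I, (ha.ofReal.add (hb.ofReal.mul_const _)).congr' ?_⟩
  filter_upwards [self_mem_nhdsWithin] with ε hε
  rw [← Complex.re_add_im (truncHilbert f ε t)]
  exact congr_arg₂ (fun a b : ℝ => (a : ℂ) + b * Complex.I)
    (map_truncHilbert Complex.reCLM hf hε t).symm (map_truncHilbert Complex.imCLM hf hε t).symm

variable {f : ℝ → ℂ} {t : ℝ}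

lemma setIntegral_div_sub_eq_truncHilbert (f : ℝ → ℂ) (ε t : ℝ) :
    ∫ x in {x : ℝ | x ∈ Ioo (-1 : ℝ) 1 ∧ ε ≤ |x - t|}, f x / ((x : ℂ) - (t : ℂ)) =
      truncHilbert ((Ioo (-1) 1).indicator f) ε t := by
  have hset : {x : ℝ | x ∈ Ioo (-1 : ℝ) 1 ∧ ε ≤ |x - t|} = {x | ε ≤ |x - t|} ∩ Ioo (-1) 1 :=
    inter_comm (Ioo (-1) 1) {x | ε ≤ |x - t|}
  rw [hset, ← setIntegral_indicator measurableSet_Ioo, truncHilbert]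
  congr 1 with x
  by_cases hx : x ∈ Ioo (-1 : ℝ) 1
  · rw [indicator_of_mem hx, indicator_of_mem hx, Complex.real_smul, div_eq_inv_mul]
    push_cast
    rfl
  · rw [indicator_of_notMem hx, indicator_of_notMem hx, smul_zero]

lemma FHT_eq_of_tendsto_truncHilbert {l : ℂ}
    (h : Tendsto (fun ε => truncHilbert ((Ioo (-1) 1).indicator f) ε t) (𝓝[>] 0) (𝓝 l)) :
    FHT f t = (Real.pi : ℂ)⁻¹ * l := by
  simp only [FHT, setIntegral_div_sub_eq_truncHilbert]
  exact (h.const_mul _).limUnder_eq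

lemma MemLlogL.integrable_indicator (hf : MemLlogL f) :
    Integrable ((Ioo (-1) 1).indicator f) := by
  obtain ⟨hmeas, hlog⟩ := hf
  have hconst : IntegrableOn (fun _ : ℝ => Real.exp 1) (Ioo (-1 : ℝ) 1) :=
    integrableOn_const (by simp)
  refine (integrable_indicator_iff measurableSet_Ioo).2
    ((hconst.add hlog).mono' hmeas (.of_forall fun x => ?_))
  dsimp only [Pi.add_apply]
  rcases le_total ‖f x‖ (Real.exp 1) with h | h
  · exact h.trans (le_add_of_nonneg_right (mul_nonneg (norm_nonneg _) (le_max_right _ _)))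
  · have hlog1 : 1 ≤ max (Real.log ‖f x‖) 0 :=
      le_max_of_le_left ((Real.le_log_iff_exp_le ((Real.exp_pos 1).trans_le h)).2 h)
    exact (le_mul_of_one_le_right (norm_nonneg _) hlog1).trans
      (le_add_of_nonneg_left (Real.exp_pos 1).le)

lemma MemLlogL.isLLogL_norm_indicator (hf : MemLlogL f) :
    IsLLogL fun x => ‖(Ioo (-1) 1).indicator f x‖ where
  integrable := hf.integrable_indicator.norm
  integrable_mul_posLog := by
    refine ((integrable_indicator_iff measurableSet_Ioo).2 hf.2).congr (.of_forall fun x => ?_)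
    by_cases hx : x ∈ Ioo (-1 : ℝ) 1
    · simp only [indicator_of_mem hx, abs_norm, Real.posLog, max_comm]
    · simp only [indicator_of_notMem hx, norm_zero, abs_zero, zero_mul]
  eq_zero x hx := by rw [indicator_of_notMem hx, norm_zero]

lemma MemLlogL.isHilbertNull_map (hf : MemLlogL f) (h : ∀ᵐ t ∂μI, FHT f t = 0)
    (L : ℂ →L[ℝ] ℝ) (hL : ∀ z, |L z| ≤ ‖z‖) :
    IsHilbertNull fun x => L ((Ioo (-1) 1).indicator f x) where
  toIsLLogL := hf.isLLogL_norm_indicator.of_abs_le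
    (L.continuous.comp_aestronglyMeasurable hf.integrable_indicator.1) fun x => by
      rw [abs_norm]
      exact hL _
  ae_tendsto := by
    filter_upwards [(ae_restrict_iff' measurableSet_Ioo).1 h,
      ae_exists_tendsto_truncHilbert_complex hf.integrable_indicator] with t hFHT ⟨l, hl⟩ ht
    have hzero : (Real.pi : ℂ)⁻¹ * l = 0 := FHT_eq_of_tendsto_truncHilbert hl ▸ hFHT ht
    have hl0 : l = 0 := (mul_eq_zero.1 hzero).resolve_left (by simp [Real.pi_ne_zero])
    simpa only [hl0, map_zero] using tendsto_map_truncHilbert L hf.integrable_indicator hl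

lemma FHT_eq_zero_of_ae_eq_div_sqrt {c : ℂ}
    (h : ∀ᵐ x : ℝ ∂μI, f x = c / (Real.sqrt (1 - x ^ 2) : ℂ)) (ht : t ∈ Ioo (-1 : ℝ) 1) :
    FHT f t = 0 := by
  let L : ℝ →L[ℝ] ℂ := ContinuousLinearMap.toSpanSingleton ℝ c
  have hfL : (Ioo (-1) 1).indicator f =ᵐ[volume] fun x => L (arcsineWeight x) := by
    filter_upwards [(ae_restrict_iff' measurableSet_Ioo).1 h] with x hx
    by_cases hxI : x ∈ Ioo (-1 : ℝ) 1
    · simp [L, indicator_of_mem hxI, hx hxI, arcsineWeight, semicircle, div_eq_inv_mul]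
    · simp [indicator_of_notMem hxI, arcsineWeight_eq_zero hxI]
  have hlim := tendsto_map_truncHilbert L isLLogL_arcsineWeight.integrable
    (tendsto_truncHilbert_arcsineWeight ht)
  rw [FHT_eq_of_tendsto_truncHilbert (hlim.congr fun ε => integral_congr_ae <|
    ae_restrict_of_ae <| hfL.symm.mono fun x hx => congr_arg _ hx), map_zero, mul_zero]

end ComplexValued

/-- The kernel of `T : L log L(-1,1) → L¹(-1,1)` is the span of `x ↦ 1/√(1-x²)`. -/
theorem FHT_kernel (f : ℝ → ℂ) (hf : MemLlogL f) :
    (∀ᵐ t ∂μI, FHT f t = 0) ↔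
      ∃ c : ℂ, ∀ᵐ x : ℝ ∂μI, f x = c / (Real.sqrt (1 - x ^ 2) : ℂ) := by
  refine ⟨fun h => ?_, fun ⟨c, hc⟩ =>
    ae_restrict_of_forall_mem measurableSet_Ioo fun t => FHT_eq_zero_of_ae_eq_div_sqrt hc⟩
  obtain ⟨a, ha⟩ := (hf.isHilbertNull_map h Complex.reCLM
    Complex.abs_re_le_norm).exists_ae_eq_mul_arcsineWeight
  obtain ⟨b, hb⟩ := (hf.isHilbertNull_map h Complex.imCLM
    Complex.abs_im_le_norm).exists_ae_eq_mul_arcsineWeight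
  refine ⟨a + b * Complex.I, (ae_restrict_iff' measurableSet_Ioo).2 ?_⟩
  filter_upwards [ha, hb] with x hxa hxb hx
  rw [indicator_of_mem hx, arcsineWeight, semicircle] at hxa hxb
  rw [← Complex.re_add_im (f x), ← Complex.reCLM_apply, hxa, ← Complex.imCLM_apply, hxb]
  push_cast
  ring
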